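/- Let m and p be positive integers, set l = 4mp+1, t = 4mp−2p+1 and p' = 2mp, let N be a positive integer, and let q be a nonzero complex number with (q;q)_{N−1} ≠ 0. Then, with a(n), b₁(n), b₂(n), X(n) as defined in the context (all exponents of q occurring are integers), Σ_{N−1 ≥ n_{p'} ≥ ⋯ ≥ n_1 ≥ 0} q^{a(n)N + b₁(n) + b₂(n)} X(n) = Σ_{N−1 ≥ n_{2mp} ≥ ⋯ ≥ n_1 ≥ 0} (q^{1−N};q)_{n_{2mp}} (−1)^{n_{2mp}} q^{−n_{2mp}(n_{2mp}+1)/2} · ∏_{1 ≤ i < j ≤ 2mp, m ∤ i} q^{Δ_{i,j,m} n_i n_j} · ∏_{i=1}^{2p−1} (−1)^{n_{mi}} q^{(−1)^{i+1} N n_{mi} + n_{mi}(n_{mi}+1)/2} · ∏_{i=1}^{2mp−1} q^{β_{i,m} n_i} [n_{i+1}; n_i]_q. -/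

import Mathlib

open Finset

noncomputable section

/-- The q-Pochhammer symbol `(a; q)_n = ∏_{k=0}^{n-1} (1 - a q^k)`. -/
def qPoch (a q : ℂ) (n : ℕ) : ℂ := ∏ k ∈ Finset.range n, (1 - a * q ^ k)

/-- The Gaussian binomial coefficient `[n; k]_q` as a polynomial in `q` over `ℤ`,
defined by the q-Pascal rule `[n; k] = [n-1; k-1] + q^k [n-1; k]`.  It is the
polynomial equal to `(q;q)_n / ((q;q)_{n-k} (q;q)_k)`. -/
def gaussPoly : ℕ → ℕ → Polynomial ℤ
  | _, 0 => 1
  | 0, _ + 1 => 0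
  | n + 1, k + 1 => gaussPoly n k + Polynomial.X ^ (k + 1) * gaussPoly n (k + 1)

/-- The Gaussian binomial coefficient `[n; k]_q` evaluated at `q : ℂ`. -/
def gbin (q : ℂ) (n k : ℕ) : ℂ := Polynomial.aeval q (gaussPoly n k)

/-- `σ_j = (-1)^⌊(2j-1)t/l⌋`. -/
def sigmaT (l t j : ℕ) : ℤ := (-1) ^ ((2 * j - 1) * t / l)

/-- `r(j)`: the unique integer with `r(j) ≡ (2j-1)t (mod 2l)` and `-l < r(j) < l`. -/
def rT (l t j : ℕ) : ℤ :=
  if (((2 * j - 1) * t % (2 * l) : ℕ) : ℤ) < (l : ℤ) then (((2 * j - 1) * t % (2 * l) : ℕ) : ℤ)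
  else (((2 * j - 1) * t % (2 * l) : ℕ) : ℤ) - 2 * (l : ℤ)

/-- `r'(j) = (|r(j)| + 1)/2`. -/
def rpT (l t j : ℕ) : ℕ := ((rT l t j).natAbs + 1) / 2

open Classical in
/-- `i_k`: the unique `j ∈ {1, …, (l-1)/2}` with `r'(j) = k`. -/
def iT (l t k : ℕ) : ℕ :=
  if h : ∃ j, j ∈ Finset.Icc 1 ((l - 1) / 2) ∧ rpT l t j = k then h.choose else 0

/-- `ε_{i,j,m}`: `1` if `j ≡ -i, -i-1 (mod 2m)`, `-1` if `j ≡ i, i-1 (mod 2m)`,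
`0` otherwise (and `0` when `m ∣ i`, a case excluded in all uses). -/
def epsLO (m i j : ℕ) : ℤ :=
  if m ∣ i then 0
  else if 2 * m ∣ (i + j) ∨ 2 * m ∣ (i + j + 1) then 1
  else if (2 * (m : ℤ)) ∣ ((j : ℤ) - (i : ℤ)) ∨ (2 * (m : ℤ)) ∣ ((j : ℤ) - (i : ℤ) + 1) then -1
  else 0

/-- `Δ_{i,j,m}`: `1` if `j ≡ -i, -i+1 (mod 2m)`, `-1` if `j ≡ i, i+1 (mod 2m)`,
`0` otherwise (and `0` when `m ∣ i`, a case excluded in all uses). -/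
def deltaLO (m i j : ℕ) : ℤ :=
  if m ∣ i then 0
  else if 2 * m ∣ (i + j) ∨ 2 * m ∣ (i + j - 1) then 1
  else if (2 * (m : ℤ)) ∣ ((j : ℤ) - (i : ℤ)) ∨ (2 * (m : ℤ)) ∣ ((j : ℤ) - (i : ℤ) - 1) then -1
  else 0

/-- `γ_{i,m} = 1` if `i ≡ 1, …, m-1 (mod 2m)` and `-1` otherwise. -/
def gamLO (m i : ℕ) : ℤ :=
  if 1 ≤ i % (2 * m) ∧ i % (2 * m) ≤ m - 1 then 1 else -1

/-- `β_{i,m} = 1` if `i ≡ 1, …, m-1 (mod 2m)`, `-1` if `i ≡ m+1, …, 2m-1 (mod 2m)`,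
and `0` if `m ∣ i`. -/
def betLO (m i : ℕ) : ℤ :=
  if 1 ≤ i % (2 * m) ∧ i % (2 * m) ≤ m - 1 then 1
  else if m + 1 ≤ i % (2 * m) ∧ i % (2 * m) ≤ 2 * m - 1 then -1
  else 0

/-- Extend a tuple `f : Fin P → Fin N` to `n : ℕ → ℕ` with `n i = f (i-1)` for
`1 ≤ i ≤ P` and `n i = 0` otherwise (in particular `n 0 = 0`). -/
def extTup (P N : ℕ) (f : Fin P → Fin N) : ℕ → ℕ :=
  fun i => if h : 1 ≤ i ∧ i ≤ P then (f ⟨i - 1, by omega⟩ : ℕ) else 0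

/-- Takata's exponent `a(n)` (an integer; every integer division below is exact). -/
def aT (l t : ℕ) (n : ℕ → ℕ) : ℤ :=
  -(∑ j ∈ Icc 1 ((l - 1) / 2), (∑ k ∈ Icc (rpT l t j) ((l - 1) / 2),
      (sigmaT l t (iT l t k) + sigmaT l t (iT l t ((l - 1) / 2 + 1 - k))) / 2) *
      ((n j : ℤ) - (n (j - 1) : ℤ)))
  - ∑ j ∈ Icc 1 ((l - 1) / 2 - 1), ((sigmaT l t (j + 1) + sigmaT l t ((l - 1) / 2 + 1 - j)) / 2) * (n j : ℤ)
  - ((sigmaT l t ((l - 1) / 2) + 1) / 2) * (n ((l - 1) / 2) : ℤ)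
  - ∑ j ∈ Icc 1 ((l - 1) / 2), sigmaT l t j

/-- Takata's exponent `b₁(n)` (an integer; every integer division below is exact
whenever the factor it multiplies is nonzero). -/
def b1T (l t : ℕ) (n : ℕ → ℕ) : ℤ :=
  -aT l t n
  + ∑ k ∈ Icc 1 ((l - t) / 2), ((1 - sigmaT l t (iT l t k)) / 2) * (n (iT l t k - 1) : ℤ)
  - ∑ k ∈ Icc ((l - t) / 2 + 1) ((l - 1) / 2), (n (iT l t k - 1) : ℤ)
  + ∑ k ∈ Icc ((l - t) / 2 + 1) ((l - 1) / 2), ((1 + sigmaT l t (iT l t k)) / 2) * (n (iT l t k) : ℤ)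
  - (1 + sigmaT l t ((l - 1) / 2)) * (n ((l - 1) / 2) : ℤ)
  + ∑ j ∈ Icc 1 ((l - 1) / 2 - 1), ((sigmaT l t (j + 1) - sigmaT l t j) / 2) * (n j : ℤ)
  - ∑ k ∈ Icc 1 ((l - 1) / 2 - 1), ∑ k' ∈ Icc (k + 1) ((l - 1) / 2),
      ((1 + Int.sign ((iT l t k : ℤ) - (iT l t k' : ℤ))) / 2) *
        ((sigmaT l t (iT l t k) - sigmaT l t (iT l t k')) / 2) *
        ((n (iT l t k) : ℤ) - (n (iT l t k - 1) : ℤ)) *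
        ((n (iT l t k') : ℤ) - (n (iT l t k' - 1) : ℤ))
  + ∑ j ∈ Icc 1 ((l - 1) / 2), sigmaT l t j *
      (∑ k ∈ Icc 1 (rpT l t j), ((n (iT l t k) : ℤ) - (n (iT l t k - 1) : ℤ))) * (n (j - 1) : ℤ)

/-- Takata's exponent `b₂(n)`. -/
def b2T (l t : ℕ) (n : ℕ → ℕ) : ℤ :=
  if l < 2 * t then
    ∑ k ∈ Icc ((l - t) / 2 + 1) ((t - 1) / 2),
      ((1 + sigmaT l t (iT l t k)) / 2) * (n (iT l t k - 1) : ℤ)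
  else
    -∑ k ∈ Icc ((t + 1) / 2 + 1) ((l - t) / 2),
      ((1 + sigmaT l t (iT l t k)) / 2) * (n (iT l t k - 1) : ℤ)

/-- Takata's `κ(p')`. -/
def kapT (l t N : ℕ) (n : ℕ → ℕ) : ℤ :=
  if sigmaT l t ((l - 1) / 2) = -1 then -(N : ℤ) * (n ((l - 1) / 2) : ℤ) else 0

/-- Takata's `τ(j)`. -/
def tauT (l t : ℕ) (q : ℂ) (n : ℕ → ℕ) (j : ℕ) : ℂ :=
  if sigmaT l t j = -1 then (-1 : ℂ) ^ (n j - n (j - 1))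
  else q ^ ((((n j : ℤ) - (n (j - 1) : ℤ)) * (((n j : ℤ) - (n (j - 1) : ℤ)) + 1)) / 2)

/-- Takata's `X(n)`. -/
def XT (l t N : ℕ) (q : ℂ) (n : ℕ → ℕ) : ℂ :=
  (-1 : ℂ) ^ (n ((l - 1) / 2)) * q ^ kapT l t N n *
    (qPoch q q (N - 1) * qPoch q q (n ((l - 1) / 2)) / qPoch q q (N - n ((l - 1) / 2) - 1)) *
    ∏ j ∈ Icc 1 ((l - 1) / 2), tauT l t q n j / qPoch q q (n j - n (j - 1))

/-!
Cut `{1, …, 2mp}` into `p` blocks of length `2m` and each block into halves at its centre. On the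
left halves `σ = 1`, on the right halves `σ = -1`, and on either half `r'` transposes the grid
(block, distance from the centre), up to a reflection for the left halves. Hence `a(n)`, `b₁(n)`
and `b₂(n)` are explicit sums over blocks. Comparing their quadratic parts with the `Δ`-sum block
pair by block pair leaves telescoping sums; the ends of blocks `a < b` pair off and telescope
again in `a`, because the last entry of a block is the entry just before the next block. The
remaining squares combine with the triangular numbers in `τ` into the factors at the multiples of
`m`, and the reflection of `(q^{1-N}; q)_n` accounts for the other factors of `X(n)`.
-/

section Residue

variable {l t : ℕ}

theorem rT_modEq (l t j : ℕ) : rT l t j ≡ ((2 * j - 1) * t : ℕ) [ZMOD 2 * l] := by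
  rw [rT, Int.natCast_mod, Nat.cast_mul 2 l, Nat.cast_two]
  split_ifs
  · exact Int.mod_modEq _ _
  · exact Int.sub_modulus_modEq_iff.2 (Int.mod_modEq _ _)

theorem rT_mem_Ico (hl : 0 < l) (t j : ℕ) : rT l t j ∈ Set.Ico (-l : ℤ) l := by
  have hlt : (2 * j - 1) * t % (2 * l) < 2 * l := Nat.mod_lt _ (by omega)
  rw [rT, Set.mem_Ico]
  split_ifs <;> omega

theorem rT_eq_of_modEq {j : ℕ} {r : ℤ} (hr : r ∈ Set.Ico (-l : ℤ) l)
    (h : r ≡ ((2 * j - 1) * t : ℕ) [ZMOD 2 * l]) : rT l t j = r := by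
  obtain ⟨hle, hlt⟩ := hr
  obtain ⟨hle', hlt'⟩ := rT_mem_Ico (l := l) (by omega) t j
  exact sub_eq_zero.1 (Int.eq_zero_of_abs_lt_dvd (h.trans (rT_modEq l t j).symm).dvd
    (abs_lt.2 ⟨by linarith, by linarith⟩))

theorem sigmaT_eq_ite (hl : 0 < l) (t j : ℕ) :
    sigmaT l t j = if 0 ≤ rT l t j then 1 else -1 := by
  have hmod := Nat.mod_mul (x := (2 * j - 1) * t) (a := l) (b := 2)
  have hlt := Nat.mod_lt ((2 * j - 1) * t) hl
  rw [sigmaT, rT, Nat.mul_comm 2 l, hmod]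
  rcases Nat.mod_two_eq_zero_or_one ((2 * j - 1) * t / l) with hpar | hpar
  · rw [(Nat.even_iff.2 hpar).neg_one_pow, hpar, if_pos]
    split_ifs <;> omega
  · rw [(Nat.odd_iff.2 hpar).neg_one_pow, hpar, if_neg]
    split_ifs <;> omega

theorem odd_rT (ht : Odd t) {j : ℕ} (hj : 1 ≤ j) : Odd (rT l t j) := by
  have hodd : Odd ((2 * j - 1) * t) := (by rw [Nat.odd_iff]; omega : Odd (2 * j - 1)).mul ht
  have hmod : rT l t j ≡ ((2 * j - 1) * t : ℕ) [ZMOD 2] := (rT_modEq l t j).of_mul_right _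
  rw [Int.odd_iff, hmod, ← Int.odd_iff]
  exact_mod_cast hodd

theorem natAbs_rT_lt (hl : Odd l) (hlt : l.Coprime t) {j : ℕ} (hj : j ∈ Icc 1 ((l - 1) / 2)) :
    (rT l t j).natAbs < l := by
  obtain ⟨hj1, hjl⟩ := mem_Icc.1 hj
  have hr := rT_mem_Ico hl.pos t j
  have hne : rT l t j ≠ -l := by
    intro hrl
    have hdvd : (l : ℤ) ∣ ((2 * j - 1) * t : ℕ) :=
      ((rT_modEq l t j).of_mul_left 2).dvd_iff.1 (by simp [hrl])
    exact Nat.not_dvd_of_pos_of_lt (by omega) (by omega)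
      (hlt.dvd_of_dvd_mul_right (Int.natCast_dvd_natCast.1 hdvd))
  have := hr.1
  have := hr.2
  omega

theorem rpT_mem (hl : Odd l) (ht : Odd t) (hlt : l.Coprime t) {j : ℕ}
    (hj : j ∈ Icc 1 ((l - 1) / 2)) : rpT l t j ∈ Icc 1 ((l - 1) / 2) := by
  have hr := natAbs_rT_lt hl hlt hj
  have hodd := Int.natAbs_odd.2 (odd_rT (l := l) ht (mem_Icc.1 hj).1)
  rw [Nat.odd_iff] at hodd hl
  rw [mem_Icc, rpT]
  omega

theorem dvd_rT_sub (l t : ℕ) {j : ℕ} (hj : 1 ≤ j) : (l : ℤ) ∣ rT l t j - (2 * j - 1) * t := by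
  have h := ((rT_modEq l t j).of_mul_left 2).symm.dvd
  push_cast [show 1 ≤ 2 * j by omega] at h
  exact h

theorem rpT_injOn (hl : Odd l) (ht : Odd t) (hlt : l.Coprime t) :
    Set.InjOn (rpT l t) (Icc 1 ((l - 1) / 2) : Finset ℕ) := by
  intro i hi j hj hij
  obtain ⟨hi1, hil⟩ := mem_Icc.1 hi
  obtain ⟨hj1, hjl⟩ := mem_Icc.1 hj
  have hcop : IsCoprime (l : ℤ) (2 * t) :=
    IsCoprime.mul_right (by exact_mod_cast hl.coprime_two_right.isCoprime) hlt.isCoprime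
  have habs : (rT l t i).natAbs = (rT l t j).natAbs := by
    have hoddi := Nat.odd_iff.1 (Int.natAbs_odd.2 (odd_rT (l := l) ht hi1))
    have hoddj := Nat.odd_iff.1 (Int.natAbs_odd.2 (odd_rT (l := l) ht hj1))
    rw [rpT, rpT] at hij
    omega
  rcases Int.natAbs_eq_natAbs_iff.1 habs with hr | hr
  · have hdvd : (l : ℤ) ∣ 2 * t * (i - j) :=
      calc (l : ℤ) ∣ (rT l t j - (2 * j - 1) * t) - (rT l t i - (2 * i - 1) * t) :=
            dvd_sub (dvd_rT_sub l t hj1) (dvd_rT_sub l t hi1)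
        _ = 2 * t * (i - j) := by rw [hr]; ring
    have hzero := Int.eq_zero_of_abs_lt_dvd (hcop.dvd_of_dvd_mul_left hdvd)
      (abs_lt.2 ⟨by omega, by omega⟩)
    omega
  · have hdvd : (l : ℤ) ∣ 2 * t * (i + j - 1) :=
      calc (l : ℤ) ∣ -((rT l t j - (2 * j - 1) * t) + (rT l t i - (2 * i - 1) * t)) :=
            (dvd_add (dvd_rT_sub l t hj1) (dvd_rT_sub l t hi1)).neg_right
        _ = 2 * t * (i + j - 1) := by rw [hr]; ring
    have hzero := Int.eq_zero_of_abs_lt_dvd (hcop.dvd_of_dvd_mul_left hdvd)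
      (abs_lt.2 ⟨by omega, by omega⟩)
    omega

theorem iT_spec (hl : Odd l) (ht : Odd t) (hlt : l.Coprime t) {k : ℕ}
    (hk : k ∈ Icc 1 ((l - 1) / 2)) :
    iT l t k ∈ Icc 1 ((l - 1) / 2) ∧ rpT l t (iT l t k) = k := by
  have hsurj := surjOn_of_injOn_of_card_le (rpT l t)
    (fun _ hj => rpT_mem hl ht hlt hj) (rpT_injOn hl ht hlt) le_rfl
  have hex : ∃ j, j ∈ Icc 1 ((l - 1) / 2) ∧ rpT l t j = k := hsurj hk
  rw [iT, dif_pos hex]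
  exact hex.choose_spec

theorem iT_rpT (hl : Odd l) (ht : Odd t) (hlt : l.Coprime t) {j : ℕ}
    (hj : j ∈ Icc 1 ((l - 1) / 2)) : iT l t (rpT l t j) = j := by
  obtain ⟨hmem, heq⟩ := iT_spec hl ht hlt (rpT_mem hl ht hlt hj)
  exact rpT_injOn hl ht hlt hmem hj heq

theorem sum_Icc_iT {M : Type*} [AddCommMonoid M] (hl : Odd l) (ht : Odd t) (hlt : l.Coprime t)
    {a b : ℕ} (ha : 1 ≤ a) (hb : b ≤ (l - 1) / 2) (F : ℕ → M) :
    ∑ k ∈ Icc a b, F (iT l t k) =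
      ∑ j ∈ Icc 1 ((l - 1) / 2) with rpT l t j ∈ Icc a b, F j := by
  have hsub := Icc_subset_Icc ha hb
  refine sum_nbij' (iT l t) (rpT l t) (fun k hk => ?_) (fun j hj => (mem_filter.1 hj).2)
    (fun k hk => (iT_spec hl ht hlt (hsub hk)).2)
    (fun j hj => iT_rpT hl ht hlt (mem_filter.1 hj).1) (fun _ _ => rfl)
  obtain ⟨hmem, heq⟩ := iT_spec hl ht hlt (hsub hk)
  exact mem_filter.2 ⟨hmem, heq.symm ▸ hk⟩

theorem sum_Icc_iT_lt {M : Type*} [AddCommMonoid M] (hl : Odd l) (ht : Odd t)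
    (hlt : l.Coprime t) (F : ℕ → ℕ → M) :
    ∑ k ∈ Icc 1 ((l - 1) / 2 - 1), ∑ k' ∈ Icc (k + 1) ((l - 1) / 2), F (iT l t k) (iT l t k') =
      ∑ j ∈ Icc 1 ((l - 1) / 2), ∑ j' ∈ Icc 1 ((l - 1) / 2),
        if rpT l t j < rpT l t j' then F j j' else 0 := by
  have hinner : ∀ k ∈ Icc 1 ((l - 1) / 2 - 1),
      ∑ k' ∈ Icc (k + 1) ((l - 1) / 2), F (iT l t k) (iT l t k') =
        ∑ j' ∈ Icc 1 ((l - 1) / 2),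
          if rpT l t (iT l t k) < rpT l t j' then F (iT l t k) j' else 0 := by
    intro k hk
    have hk' : k ∈ Icc 1 ((l - 1) / 2) := Icc_subset_Icc_right (Nat.sub_le _ _) hk
    rw [sum_Icc_iT hl ht hlt (Nat.le_add_left 1 k) le_rfl, sum_filter]
    refine sum_congr rfl fun j' hj' => ?_
    have := mem_Icc.1 (rpT_mem hl ht hlt hj')
    rw [(iT_spec hl ht hlt hk').2]
    exact if_congr (by rw [mem_Icc]; omega) rfl rfl
  rw [sum_congr rfl hinner, sum_Icc_iT hl ht hlt le_rfl (Nat.sub_le _ _) fun j =>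
    ∑ j' ∈ Icc 1 ((l - 1) / 2), if rpT l t j < rpT l t j' then F j j' else 0]
  refine sum_filter_of_ne fun j hj hne => ?_
  obtain ⟨j', hj', hne'⟩ := exists_ne_zero_of_sum_ne_zero hne
  have hlt' := (ite_ne_right_iff.1 hne').1
  have := mem_Icc.1 (rpT_mem hl ht hlt hj)
  have := mem_Icc.1 (rpT_mem hl ht hlt hj')
  rw [mem_Icc]
  omega

end Residue

/-- Split `{1, …, 2mp}` into `p` blocks of length `2m`. The indices `leftIdx m v w` and
`rightIdx m v w`, for `w < m`, are the two indices of block `v` at distance `w + 1/2` from its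
centre `2mv + m + 1/2`. The value `leftIdx m v m` is the last index of block `v - 1`. -/
def leftIdx (m v w : ℕ) : ℕ := 2 * m * v + m - w

/-- The mirror image of `leftIdx m v w` in block `v`. -/
def rightIdx (m v w : ℕ) : ℕ := 2 * m * v + m + w + 1

section Blocks

variable {m p v v' w w' : ℕ}

theorem natCast_leftIdx (hw : w ≤ m) : (leftIdx m v w : ℤ) = 2 * m * v + m - w := by
  rw [leftIdx]
  push_cast [show w ≤ 2 * m * v + m by omega]
  ring

theorem natCast_rightIdx (m v w : ℕ) : (rightIdx m v w : ℤ) = 2 * m * v + m + w + 1 := by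
  rw [rightIdx]
  push_cast
  ring

theorem two_mul_mul_add_lt_iff {c a b x y : ℤ} (hx : x ∈ Set.Ioc (-c) c)
    (hy : y ∈ Set.Ioc (-c) c) : 2 * c * a + x < 2 * c * b + y ↔ a < b ∨ a = b ∧ x < y := by
  obtain ⟨hx1, hx2⟩ := hx
  obtain ⟨hy1, hy2⟩ := hy
  rcases lt_trichotomy a b with hab | rfl | hab
  · have : 2 * c * (a + 1) ≤ 2 * c * b := mul_le_mul_of_nonneg_left hab (by omega)
    simp only [hab, true_or, iff_true]
    linarith
  · simp
  · have : 2 * c * (b + 1) ≤ 2 * c * a := mul_le_mul_of_nonneg_left hab (by omega)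
    simp only [hab.not_gt, hab.ne', false_and, or_self, iff_false, not_lt]
    linarith

theorem leftIdx_lt_leftIdx_iff (hw : w < m) (hw' : w' < m) :
    leftIdx m v w < leftIdx m v' w' ↔ v < v' ∨ v = v' ∧ w' < w := by
  have h := two_mul_mul_add_lt_iff (c := m) (a := v) (b := v') (x := -w) (y := -w')
    ⟨by omega, by omega⟩ ⟨by omega, by omega⟩
  zify
  rw [natCast_leftIdx hw.le, natCast_leftIdx hw'.le, ← neg_lt_neg_iff (a := (w : ℤ)), ← h]
  constructor <;> intro <;> linarith

theorem leftIdx_lt_rightIdx_iff (hw : w < m) (hw' : w' < m) :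
    leftIdx m v w < rightIdx m v' w' ↔ v ≤ v' := by
  have h := two_mul_mul_add_lt_iff (c := m) (a := v) (b := v') (x := -w) (y := w' + 1)
    ⟨by omega, by omega⟩ ⟨by omega, by omega⟩
  have := natCast_leftIdx (v := v) hw.le
  have := natCast_rightIdx m v' w'
  omega

theorem rightIdx_lt_leftIdx_iff (hw : w < m) (hw' : w' < m) :
    rightIdx m v w < leftIdx m v' w' ↔ v < v' := by
  have h := two_mul_mul_add_lt_iff (c := m) (a := v) (b := v') (x := w + 1) (y := -w')
    ⟨by omega, by omega⟩ ⟨by omega, by omega⟩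
  have := natCast_leftIdx (v := v') hw'.le
  have := natCast_rightIdx m v w
  omega

theorem rightIdx_lt_rightIdx_iff (hw : w < m) (hw' : w' < m) :
    rightIdx m v w < rightIdx m v' w' ↔ v < v' ∨ v = v' ∧ w < w' := by
  have h := two_mul_mul_add_lt_iff (c := m) (a := v) (b := v') (x := w + 1) (y := w' + 1)
    ⟨by omega, by omega⟩ ⟨by omega, by omega⟩
  have := natCast_rightIdx m v w
  have := natCast_rightIdx m v' w'
  omega

theorem leftIdx_mem (hv : v < p) (hw : w < m) : leftIdx m v w ∈ Icc 1 (2 * m * p) := by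
  have : 2 * m * (v + 1) ≤ 2 * m * p := Nat.mul_le_mul_left _ hv
  rw [mul_add] at this
  rw [mem_Icc, leftIdx]
  omega

theorem rightIdx_mem (hv : v < p) (hw : w < m) : rightIdx m v w ∈ Icc 1 (2 * m * p) := by
  have : 2 * m * (v + 1) ≤ 2 * m * p := Nat.mul_le_mul_left _ hv
  rw [mul_add] at this
  rw [mem_Icc, rightIdx]
  omega

theorem exists_eq_leftIdx_or_rightIdx {j : ℕ} (hj : j ∈ Icc 1 (2 * m * p)) :
    ∃ v < p, ∃ w < m, j = leftIdx m v w ∨ j = rightIdx m v w := by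
  rw [mem_Icc] at hj
  have hm : 0 < 2 * m := Nat.pos_of_ne_zero fun h => by simp [h] at hj; omega
  have hdiv := Nat.div_add_mod (j - 1) (2 * m)
  have hmod := Nat.mod_lt (j - 1) hm
  have hv : (j - 1) / (2 * m) < p := Nat.div_lt_of_lt_mul (by omega)
  simp only [leftIdx, rightIdx]
  rcases Nat.lt_or_ge ((j - 1) % (2 * m)) m with hlt | hge
  · exact ⟨_, hv, m - 1 - (j - 1) % (2 * m), by omega, Or.inl (by omega)⟩
  · exact ⟨_, hv, (j - 1) % (2 * m) - m, by omega, Or.inr (by omega)⟩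

theorem reflect_leftIdx (hv : v < p) (hw : w < m) :
    2 * m * p + 1 - leftIdx m v w = rightIdx m (p - 1 - v) w := by
  obtain ⟨u, rfl⟩ := Nat.exists_eq_add_of_lt hv
  rw [leftIdx, rightIdx, show v + u + 1 - 1 - v = u by omega, mul_add, mul_add]
  omega

theorem reflect_rightIdx (hv : v < p) (hw : w < m) :
    2 * m * p + 1 - rightIdx m v w = leftIdx m (p - 1 - v) w := by
  obtain ⟨u, rfl⟩ := Nat.exists_eq_add_of_lt hv
  rw [leftIdx, rightIdx, show v + u + 1 - 1 - v = u by omega, mul_add, mul_add]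
  omega

@[to_additive]
theorem prod_Icc_eq_prod_range_succ {M : Type*} [CommMonoid M] (F : ℕ → M) (K : ℕ) :
    ∏ j ∈ Icc 1 K, F j = ∏ j ∈ range K, F (j + 1) := by
  rw [← Ico_add_one_right_eq_Icc, prod_Ico_eq_prod_range]
  simp only [add_comm 1, Nat.add_sub_cancel]

theorem prod_Icc_blocks {M : Type*} [CommMonoid M] (m p : ℕ) (F : ℕ → M) :
    ∏ j ∈ Icc 1 (2 * m * p), F j =
      ∏ v ∈ range p, ∏ w ∈ range m, (F (leftIdx m v w) * F (rightIdx m v w)) := by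
  rw [prod_Icc_eq_prod_range_succ]
  induction p with
  | zero => simp
  | succ p ih =>
    have hsplit : 2 * m * (p + 1) = 2 * m * p + (m + m) := by ring
    rw [hsplit, prod_range_add, ih, prod_range_succ, prod_range_add, prod_mul_distrib,
      ← prod_range_reflect (fun w => F (2 * m * p + w + 1))]
    congr 2
    · refine prod_congr rfl fun w hw => congrArg F ?_
      rw [mem_range] at hw
      rw [leftIdx]
      omega
    · exact prod_congr rfl fun w _ => congrArg F (by rw [rightIdx]; omega)

theorem sum_Icc_blocks {M : Type*} [AddCommMonoid M] (m p : ℕ) (F : ℕ → M) :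
    ∑ j ∈ Icc 1 (2 * m * p), F j =
      ∑ v ∈ range p, ∑ w ∈ range m, (F (leftIdx m v w) + F (rightIdx m v w)) :=
  prod_Icc_blocks (M := Multiplicative M) m p F

end Blocks

/-- The parameters `l = 4mp + 1` and `t = 4mp - 2p + 1` of the double twist knot. -/
structure DoubleTwist (m p l t : ℕ) : Prop where
  m_pos : 0 < m
  p_pos : 0 < p
  l_eq : l = 4 * m * p + 1
  t_add : t + 2 * p = l

namespace DoubleTwist

variable {m p l t : ℕ}

theorem two_mul_le (h : DoubleTwist m p l t) : 2 * p ≤ 2 * m * p := by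
  have := h.m_pos
  gcongr
  omega

theorem half_l (h : DoubleTwist m p l t) : (l - 1) / 2 = 2 * m * p := by
  have := h.l_eq
  rw [mul_assoc] at this ⊢
  omega

theorem last_sub_one_add_one (h : DoubleTwist m p l t) : 2 * m * p - 1 + 1 = 2 * m * p :=
  Nat.sub_add_cancel (Nat.mul_pos (Nat.mul_pos two_pos h.m_pos) h.p_pos)

theorem half_sub (h : DoubleTwist m p l t) : (l - t) / 2 = p := by
  have := h.t_add
  omega

theorem half_t (h : DoubleTwist m p l t) : (t - 1) / 2 = 2 * m * p - p := by
  have := h.t_add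
  have := h.half_l
  omega

theorem lt_two_mul (h : DoubleTwist m p l t) : l < 2 * t := by
  have := h.t_add
  have := h.half_l
  have := h.two_mul_le
  have := h.l_eq
  omega

theorem odd_l (h : DoubleTwist m p l t) : Odd l :=
  ⟨2 * m * p, by rw [h.l_eq]; ring⟩

theorem odd_t (h : DoubleTwist m p l t) : Odd t := by
  have := h.t_add
  have := Nat.odd_iff.1 h.odd_l
  rw [Nat.odd_iff]
  omega

theorem coprime (h : DoubleTwist m p l t) : l.Coprime t := by
  have hl : (l : ℤ) = 4 * m * p + 1 := by exact_mod_cast h.l_eq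
  have ht : (t : ℤ) + 2 * p = l := by exact_mod_cast h.t_add
  refine Nat.isCoprime_iff_coprime.1 ⟨1 - 2 * m, 2 * m, ?_⟩
  linear_combination 2 * (m : ℤ) * ht + hl

theorem rT_leftIdx (h : DoubleTwist m p l t) {v w : ℕ} (hv : v < p) (hw : w < m) :
    rT l t (leftIdx m v w) = 2 * p * (2 * w + 1) + 2 * v + 1 := by
  have hl : (l : ℤ) = 4 * m * p + 1 := by exact_mod_cast h.l_eq
  have ht : (t : ℤ) + 2 * p = l := by exact_mod_cast h.t_add
  have hj := (mem_Icc.1 (leftIdx_mem hv hw)).1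
  have hle : 2 * p * (2 * w + 2) ≤ (2 * p * (2 * m) : ℤ) :=
    mul_le_mul_of_nonneg_left (by omega) (by positivity)
  have hnonneg : (0 : ℤ) ≤ 2 * p * (2 * w + 1) := by positivity
  refine rT_eq_of_modEq ⟨by linarith, by linarith⟩
    (Int.modEq_iff_dvd.2 ⟨leftIdx m v w - 1 - v, ?_⟩)
  push_cast [show 1 ≤ 2 * leftIdx m v w by omega]
  rw [natCast_leftIdx hw.le]
  linear_combination (4 * m * v + 2 * m - 2 * w - 1 : ℤ) * ht + (2 * v + 1 : ℤ) * hl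

theorem rT_rightIdx (h : DoubleTwist m p l t) {v w : ℕ} (hv : v < p) (hw : w < m) :
    rT l t (rightIdx m v w) = 2 * v + 1 - 2 * p * (2 * w + 1) := by
  have hl : (l : ℤ) = 4 * m * p + 1 := by exact_mod_cast h.l_eq
  have ht : (t : ℤ) + 2 * p = l := by exact_mod_cast h.t_add
  have hj := (mem_Icc.1 (rightIdx_mem hv hw)).1
  have hle : 2 * p * (2 * w + 2) ≤ (2 * p * (2 * m) : ℤ) :=
    mul_le_mul_of_nonneg_left (by omega) (by positivity)
  have hnonneg : (0 : ℤ) ≤ 2 * p * (2 * w) := by positivity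
  refine rT_eq_of_modEq ⟨by linarith, by linarith⟩
    (Int.modEq_iff_dvd.2 ⟨rightIdx m v w - 1 - v, ?_⟩)
  push_cast [show 1 ≤ 2 * rightIdx m v w by omega]
  rw [natCast_rightIdx]
  linear_combination (4 * m * v + 2 * m + 2 * w + 1 : ℤ) * ht + (2 * v + 1 : ℤ) * hl

theorem rT_rightIdx_neg (h : DoubleTwist m p l t) {v w : ℕ} (hv : v < p) (hw : w < m) :
    rT l t (rightIdx m v w) < 0 := by
  have hnonneg : (0 : ℤ) ≤ 2 * p * (2 * w) := by positivity
  rw [h.rT_rightIdx hv hw]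
  linarith

theorem sigmaT_leftIdx (h : DoubleTwist m p l t) {v w : ℕ} (hv : v < p) (hw : w < m) :
    sigmaT l t (leftIdx m v w) = 1 := by
  rw [sigmaT_eq_ite h.odd_l.pos, h.rT_leftIdx hv hw, if_pos (by positivity)]

theorem sigmaT_rightIdx (h : DoubleTwist m p l t) {v w : ℕ} (hv : v < p) (hw : w < m) :
    sigmaT l t (rightIdx m v w) = -1 := by
  rw [sigmaT_eq_ite h.odd_l.pos, if_neg (h.rT_rightIdx_neg hv hw).not_ge]

theorem rpT_leftIdx (h : DoubleTwist m p l t) {v w : ℕ} (hv : v < p) (hw : w < m) :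
    rpT l t (leftIdx m v w) = rightIdx p w v := by
  have hr : rT l t (leftIdx m v w) = 2 * rightIdx p w v - 1 := by
    rw [h.rT_leftIdx hv hw, natCast_rightIdx]
    ring
  have hpos := (mem_Icc.1 (rightIdx_mem hw hv)).1
  rw [rpT]
  omega

theorem rpT_rightIdx (h : DoubleTwist m p l t) {v w : ℕ} (hv : v < p) (hw : w < m) :
    rpT l t (rightIdx m v w) = leftIdx p w v := by
  have hr : rT l t (rightIdx m v w) = 1 - 2 * leftIdx p w v := by
    rw [h.rT_rightIdx hv hw, natCast_leftIdx hv.le]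
    ring
  have hpos := (mem_Icc.1 (leftIdx_mem hw hv)).1
  rw [rpT]
  omega

theorem sigmaT_reflect (h : DoubleTwist m p l t) {j : ℕ} (hj : j ∈ Icc 1 (2 * m * p)) :
    sigmaT l t (2 * m * p + 1 - j) = -sigmaT l t j := by
  obtain ⟨v, hv, w, hw, rfl | rfl⟩ := exists_eq_leftIdx_or_rightIdx hj
  · rw [reflect_leftIdx hv hw, h.sigmaT_leftIdx hv hw, h.sigmaT_rightIdx (by omega) hw]
  · rw [reflect_rightIdx hv hw, h.sigmaT_rightIdx hv hw, h.sigmaT_leftIdx (by omega) hw, neg_neg]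

theorem iT_rightIdx (h : DoubleTwist m p l t) {v w : ℕ} (hv : v < p) (hw : w < m) :
    iT l t (rightIdx p w v) = leftIdx m v w := by
  rw [← h.rpT_leftIdx hv hw,
    iT_rpT h.odd_l h.odd_t h.coprime (h.half_l.symm ▸ leftIdx_mem hv hw)]

theorem iT_leftIdx (h : DoubleTwist m p l t) {v w : ℕ} (hv : v < p) (hw : w < m) :
    iT l t (leftIdx p w v) = rightIdx m v w := by
  rw [← h.rpT_rightIdx hv hw,
    iT_rpT h.odd_l h.odd_t h.coprime (h.half_l.symm ▸ rightIdx_mem hv hw)]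

theorem sigmaT_iT_reflect (h : DoubleTwist m p l t) {k : ℕ} (hk : k ∈ Icc 1 (2 * m * p)) :
    sigmaT l t (iT l t (2 * m * p + 1 - k)) = -sigmaT l t (iT l t k) := by
  rw [mul_right_comm] at hk ⊢
  obtain ⟨w, hw, v, hv, rfl | rfl⟩ := exists_eq_leftIdx_or_rightIdx hk
  · rw [reflect_leftIdx hw hv, h.iT_leftIdx hv hw, h.iT_rightIdx hv (by omega),
      h.sigmaT_rightIdx hv hw, h.sigmaT_leftIdx hv (by omega), neg_neg]
  · rw [reflect_rightIdx hw hv, h.iT_rightIdx hv hw, h.iT_leftIdx hv (by omega),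
      h.sigmaT_leftIdx hv hw, h.sigmaT_rightIdx hv (by omega)]

end DoubleTwist

/-- The entry of the tuple `n` at distance `w` to the left of the centre of block `v`. -/
def leftEntry (n : ℕ → ℕ) (m v w : ℕ) : ℤ := n (leftIdx m v w)

/-- The entry of the tuple `n` at distance `w` to the right of the centre of block `v`,
where the centre itself is the common value at `w = 0` of both sides. -/
def rightEntry (n : ℕ → ℕ) (m v w : ℕ) : ℤ := n (rightIdx m v w - 1)

section Entries

variable {n : ℕ → ℕ}

theorem natCast_apply_leftIdx (n : ℕ → ℕ) (m v w : ℕ) :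
    (n (leftIdx m v w) : ℤ) = leftEntry n m v w := rfl

theorem natCast_apply_leftIdx_sub_one (n : ℕ → ℕ) (m v w : ℕ) :
    (n (leftIdx m v w - 1) : ℤ) = leftEntry n m v (w + 1) := rfl

theorem natCast_apply_rightIdx (n : ℕ → ℕ) (m v w : ℕ) :
    (n (rightIdx m v w) : ℤ) = rightEntry n m v (w + 1) := rfl

theorem natCast_apply_rightIdx_sub_one (n : ℕ → ℕ) (m v w : ℕ) :
    (n (rightIdx m v w - 1) : ℤ) = rightEntry n m v w := rfl

theorem rightEntry_zero (n : ℕ → ℕ) (m v : ℕ) : rightEntry n m v 0 = leftEntry n m v 0 := rfl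

theorem rightEntry_self (n : ℕ → ℕ) (m v : ℕ) :
    rightEntry n m v m = leftEntry n m (v + 1) m := by
  rw [rightEntry, leftEntry, rightIdx, leftIdx, mul_add]
  congr 2
  omega

theorem leftEntry_zero_self (h0 : n 0 = 0) : leftEntry n m 0 m = 0 := by
  simp [leftEntry, leftIdx, h0]

theorem sum_rightEntry_self_sub (h0 : n 0 = 0) (m b : ℕ) :
    ∑ v ∈ range b, (rightEntry n m v m - leftEntry n m v m) = leftEntry n m b m := by
  simp only [rightEntry_self]
  rw [sum_range_sub (fun v => leftEntry n m v m), leftEntry_zero_self h0, sub_zero]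

theorem natCast_apply_last (n : ℕ → ℕ) (m p : ℕ) :
    (n (2 * m * p) : ℤ) = leftEntry n m p m := by
  rw [leftEntry, leftIdx, Nat.add_sub_cancel]

end Entries

theorem odd_sigmaT (l t j : ℕ) : Odd (sigmaT l t j) :=
  odd_one.neg.pow

theorem sum_Icc_succ_sub_mul (s a : ℕ → ℤ) (ha : a 0 = 0) (K : ℕ) :
    ∑ j ∈ Icc 1 K, (s (j + 1) - s j) * a j =
      s (K + 1) * a (K + 1) - ∑ j ∈ Icc 1 (K + 1), s j * (a j - a (j - 1)) := by
  induction K with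
  | zero => simp [ha]
  | succ K ih =>
    rw [sum_Icc_succ_top (Nat.le_add_left 1 K), ih,
      sum_Icc_succ_top (Nat.le_add_left 1 (K + 1)), Nat.add_sub_cancel]
    ring

namespace DoubleTwist

variable {m p l t : ℕ} {n : ℕ → ℕ}

theorem sigmaT_last (h : DoubleTwist m p l t) : sigmaT l t (2 * m * p) = -1 := by
  have hm := h.m_pos
  have hp := h.p_pos
  have hlast : 2 * m * p = rightIdx m (p - 1) (m - 1) := by
    obtain ⟨k, rfl⟩ := Nat.exists_eq_succ_of_ne_zero hp.ne'
    rw [rightIdx, Nat.succ_sub_one, Nat.mul_succ]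
    omega
  rw [hlast, h.sigmaT_rightIdx (Nat.sub_lt hp one_pos) (Nat.sub_lt hm one_pos)]

theorem sum_sigmaT (h : DoubleTwist m p l t) : ∑ j ∈ Icc 1 (2 * m * p), sigmaT l t j = 0 := by
  rw [sum_Icc_blocks]
  refine sum_eq_zero fun v hv => sum_eq_zero fun w hw => ?_
  rw [mem_range] at hv hw
  rw [h.sigmaT_leftIdx hv hw, h.sigmaT_rightIdx hv hw, add_neg_cancel]

theorem sum_sigmaT_mul_sub (h : DoubleTwist m p l t) (n : ℕ → ℕ) :
    ∑ j ∈ Icc 1 (2 * m * p), sigmaT l t j * ((n j : ℤ) - n (j - 1)) =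
      ∑ v ∈ range p,
        (2 * leftEntry n m v 0 - leftEntry n m v m - rightEntry n m v m) := by
  rw [sum_Icc_blocks]
  refine sum_congr rfl fun v hv => ?_
  calc _ = ∑ w ∈ range m, ((leftEntry n m v w - leftEntry n m v (w + 1)) -
        (rightEntry n m v (w + 1) - rightEntry n m v w)) := by
        refine sum_congr rfl fun w hw => ?_
        rw [h.sigmaT_leftIdx (mem_range.1 hv) (mem_range.1 hw),
          h.sigmaT_rightIdx (mem_range.1 hv) (mem_range.1 hw), natCast_apply_leftIdx,
          natCast_apply_leftIdx_sub_one, natCast_apply_rightIdx, natCast_apply_rightIdx_sub_one]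
        ring
    _ = _ := by
        rw [sum_sub_distrib, sum_range_sub', sum_range_sub, rightEntry_zero]
        ring

theorem sum_half_sigmaT_sub (h : DoubleTwist m p l t) (h0 : n 0 = 0) :
    ∑ j ∈ Icc 1 (2 * m * p - 1), (sigmaT l t (j + 1) - sigmaT l t j) / 2 * (n j : ℤ) =
      ∑ v ∈ range p, (leftEntry n m v m - leftEntry n m v 0) := by
  have hparts := sum_Icc_succ_sub_mul (sigmaT l t) (fun j => (n j : ℤ)) (by simp [h0])
    (2 * m * p - 1)
  have htele := sum_rightEntry_self_sub h0 m p
  rw [h.last_sub_one_add_one, h.sigmaT_last, h.sum_sigmaT_mul_sub n, natCast_apply_last] at hparts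
  have hdouble : 2 * ∑ j ∈ Icc 1 (2 * m * p - 1),
      (sigmaT l t (j + 1) - sigmaT l t j) / 2 * (n j : ℤ) =
        ∑ j ∈ Icc 1 (2 * m * p - 1), (sigmaT l t (j + 1) - sigmaT l t j) * (n j : ℤ) := by
    rw [mul_sum]
    refine sum_congr rfl fun j _ => ?_
    rw [← mul_assoc, Int.two_mul_ediv_two_of_even ((odd_sigmaT l t _).sub_odd (odd_sigmaT l t _))]
  simp only [sum_sub_distrib, ← mul_sum] at hparts htele ⊢
  linarith

theorem aT_eq (h : DoubleTwist m p l t) (h0 : n 0 = 0) :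
    aT l t n = ∑ v ∈ range p, (leftEntry n m v 0 - leftEntry n m v m) := by
  have hfirst : ∀ j ∈ Icc 1 (2 * m * p), (∑ k ∈ Icc (rpT l t j) (2 * m * p),
      (sigmaT l t (iT l t k) + sigmaT l t (iT l t (2 * m * p + 1 - k))) / 2) *
        ((n j : ℤ) - n (j - 1)) = 0 := by
    intro j hj
    have hrp := rpT_mem h.odd_l h.odd_t h.coprime (h.half_l.symm ▸ hj)
    rw [sum_eq_zero, zero_mul]
    intro k hk
    rw [h.sigmaT_iT_reflect (Icc_subset_Icc_left (mem_Icc.1 hrp).1 hk), add_neg_cancel,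
      Int.zero_ediv]
  have hsecond : ∑ j ∈ Icc 1 (2 * m * p - 1),
      (sigmaT l t (j + 1) + sigmaT l t (2 * m * p + 1 - j)) / 2 * (n j : ℤ) =
        ∑ v ∈ range p, (leftEntry n m v m - leftEntry n m v 0) := by
    rw [← h.sum_half_sigmaT_sub h0]
    refine sum_congr rfl fun j hj => ?_
    rw [h.sigmaT_reflect (Icc_subset_Icc_right (Nat.sub_le _ _) hj), sub_eq_add_neg]
  rw [aT, h.half_l, sum_eq_zero hfirst, hsecond, h.sigmaT_last, h.sum_sigmaT]
  simp only [sum_sub_distrib]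
  ring

end DoubleTwist

section Blocks

variable {m p v w : ℕ}

theorem leftIdx_swap_mem (hv : v < p) (hw : w < m) : leftIdx p w v ∈ Icc 1 (2 * m * p) :=
  mul_right_comm 2 p m ▸ leftIdx_mem hw hv

theorem rightIdx_swap_mem (hv : v < p) (hw : w < m) : rightIdx p w v ∈ Icc 1 (2 * m * p) :=
  mul_right_comm 2 p m ▸ rightIdx_mem hw hv

theorem lt_rightIdx (p w v : ℕ) : p < rightIdx p w v := by
  rw [rightIdx]
  omega

theorem leftIdx_le_iff (hv : v < p) : leftIdx p w v ≤ p ↔ w = 0 := by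
  rcases w with _ | w
  · simp [leftIdx]
  · rw [leftIdx, Nat.mul_succ]
    omega

theorem rightIdx_le_sub_iff (hv : v < p) (hw : w < m) :
    rightIdx p w v ≤ 2 * m * p - p ↔ w + 1 < m := by
  obtain ⟨k, rfl⟩ := Nat.exists_eq_add_of_lt hw
  have hmul : 2 * (w + k + 1) * p = 2 * p * w + 2 * p * k + 2 * p := by ring
  rw [rightIdx, hmul]
  rcases k with _ | k
  · omega
  · rw [Nat.mul_succ]
    omega

end Blocks

namespace DoubleTwist

variable {m p l t : ℕ}

theorem sum_Icc_iT_blocks {M : Type*} [AddCommMonoid M] (h : DoubleTwist m p l t) {a b : ℕ}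
    (ha : 1 ≤ a) (hb : b ≤ 2 * m * p) (F : ℕ → M) :
    ∑ k ∈ Icc a b, F (iT l t k) = ∑ v ∈ range p, ∑ w ∈ range m,
      ((if rightIdx p w v ∈ Icc a b then F (leftIdx m v w) else 0) +
        if leftIdx p w v ∈ Icc a b then F (rightIdx m v w) else 0) := by
  rw [sum_Icc_iT h.odd_l h.odd_t h.coprime ha (h.half_l ▸ hb), h.half_l, sum_filter,
    sum_Icc_blocks]
  refine sum_congr rfl fun v hv => sum_congr rfl fun w hw => ?_
  rw [h.rpT_leftIdx (mem_range.1 hv) (mem_range.1 hw),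
    h.rpT_rightIdx (mem_range.1 hv) (mem_range.1 hw)]

theorem sum_half_one_sub_sigmaT_mul_pred (h : DoubleTwist m p l t) (n : ℕ → ℕ) :
    ∑ k ∈ Icc 1 p, (1 - sigmaT l t (iT l t k)) / 2 * (n (iT l t k - 1) : ℤ) =
      ∑ v ∈ range p, leftEntry n m v 0 := by
  have hp := h.two_mul_le
  rw [h.sum_Icc_iT_blocks le_rfl (by omega)
    fun j => (1 - sigmaT l t j) / 2 * (n (j - 1) : ℤ)]
  refine sum_congr rfl fun v hv => ?_
  calc _ = ∑ w ∈ range m, if w = 0 then rightEntry n m v w else 0 := by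
        refine sum_congr rfl fun w hw => ?_
        rw [mem_range] at hv hw
        have hpos := (mem_Icc.1 (leftIdx_swap_mem hv hw)).1
        simp only [mem_Icc, (lt_rightIdx p w v).not_ge, leftIdx_le_iff hv, hpos, and_false,
          true_and, if_false, zero_add, h.sigmaT_rightIdx hv hw, natCast_apply_rightIdx_sub_one]
        norm_num
    _ = leftEntry n m v 0 := by
        rw [sum_ite_eq' (range m) 0, if_pos (mem_range.2 h.m_pos), rightEntry_zero]

theorem sum_Icc_iT_large (h : DoubleTwist m p l t) (F : ℕ → ℤ) :
    ∑ k ∈ Icc (p + 1) (2 * m * p), F (iT l t k) = ∑ v ∈ range p,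
      (∑ w ∈ range m, (F (leftIdx m v w) + F (rightIdx m v w)) - F (rightIdx m v 0)) := by
  rw [h.sum_Icc_iT_blocks (Nat.le_add_left 1 p) le_rfl]
  refine sum_congr rfl fun v hv => ?_
  calc _ = ∑ w ∈ range m, ((F (leftIdx m v w) + F (rightIdx m v w)) -
        if w = 0 then F (rightIdx m v w) else 0) := by
        refine sum_congr rfl fun w hw => ?_
        rw [mem_range] at hv hw
        have hr := mem_Icc.1 (rightIdx_swap_mem hv hw)
        have hl := mem_Icc.1 (leftIdx_swap_mem hv hw)
        have hlarge : leftIdx p w v ∈ Icc (p + 1) (2 * m * p) ↔ ¬ w = 0 := by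
          rw [← leftIdx_le_iff hv, mem_Icc]
          omega
        rw [if_pos (mem_Icc.2 ⟨lt_rightIdx p w v, hr.2⟩),
          if_congr hlarge rfl rfl, ite_not]
        split_ifs <;> ring
    _ = _ := by rw [sum_sub_distrib, sum_ite_eq' (range m) 0, if_pos (mem_range.2 h.m_pos)]

theorem sum_pred_iT_large (h : DoubleTwist m p l t) (n : ℕ → ℕ) :
    ∑ k ∈ Icc (p + 1) (2 * m * p), (n (iT l t k - 1) : ℤ) =
      ∑ v ∈ range p, (∑ w ∈ range m, (leftEntry n m v (w + 1) + rightEntry n m v w) -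
        leftEntry n m v 0) :=
  h.sum_Icc_iT_large fun j => (n (j - 1) : ℤ)

theorem sum_half_one_add_sigmaT_mul (h : DoubleTwist m p l t) (n : ℕ → ℕ) :
    ∑ k ∈ Icc (p + 1) (2 * m * p), (1 + sigmaT l t (iT l t k)) / 2 * (n (iT l t k) : ℤ) =
      ∑ v ∈ range p, ∑ w ∈ range m, leftEntry n m v w := by
  rw [h.sum_Icc_iT_large fun j => (1 + sigmaT l t j) / 2 * (n j : ℤ)]
  refine sum_congr rfl fun v hv => ?_
  rw [mem_range] at hv
  rw [h.sigmaT_rightIdx hv h.m_pos, add_neg_cancel, Int.zero_ediv, zero_mul, sub_zero]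
  refine sum_congr rfl fun w hw => ?_
  rw [mem_range] at hw
  rw [h.sigmaT_leftIdx hv hw, h.sigmaT_rightIdx hv hw, natCast_apply_leftIdx]
  norm_num

theorem b2T_eq (h : DoubleTwist m p l t) (n : ℕ → ℕ) :
    b2T l t n =
      ∑ v ∈ range p, (∑ w ∈ range m, leftEntry n m v (w + 1) - leftEntry n m v m) := by
  rw [b2T, if_pos h.lt_two_mul, h.half_sub, h.half_t,
    h.sum_Icc_iT_blocks (Nat.le_add_left 1 p) (Nat.sub_le _ _)
      fun j => (1 + sigmaT l t j) / 2 * (n (j - 1) : ℤ)]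
  refine sum_congr rfl fun v hv => ?_
  calc _ = ∑ w ∈ range m, if w + 1 < m then leftEntry n m v (w + 1) else 0 := by
        refine sum_congr rfl fun w hw => ?_
        rw [mem_range] at hv hw
        rw [h.sigmaT_leftIdx hv hw, h.sigmaT_rightIdx hv hw]
        simp only [mem_Icc, Nat.succ_le_iff, lt_rightIdx, rightIdx_le_sub_iff hv hw, true_and,
          natCast_apply_leftIdx_sub_one]
        norm_num
    _ = _ := by
        obtain ⟨M, rfl⟩ := Nat.exists_eq_succ_of_ne_zero h.m_pos.ne'
        rw [sum_range_succ, sum_range_succ, if_neg (lt_irrefl _), add_zero, add_sub_cancel_right]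
        exact sum_congr rfl fun w hw => if_pos (Nat.succ_lt_succ (mem_range.1 hw))

end DoubleTwist

theorem sum_range_ite_lt_sub (f : ℕ → ℤ) {c m : ℕ} (hc : c ≤ m) :
    ∑ w ∈ range m, (if w < c then f (w + 1) - f w else 0) = f c - f 0 := by
  have hfilter : (range m).filter (· < c) = range c := by
    ext w
    simp only [mem_filter, mem_range]
    omega
  rw [← sum_filter, hfilter, sum_range_sub]

theorem sum_range_ite_le_sub (f : ℕ → ℤ) {c m : ℕ} (hc : c ≤ m) :
    ∑ w ∈ range m, (if c ≤ w then f (w + 1) - f w else 0) = f m - f c := by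
  have hsplit : ∀ w, (if c ≤ w then f (w + 1) - f w else 0) =
      (f (w + 1) - f w) - if w < c then f (w + 1) - f w else 0 := by
    intro w
    split_ifs <;> omega
  simp only [hsplit]
  rw [sum_sub_distrib, sum_range_ite_lt_sub f hc, sum_range_sub]
  ring

/-- The contribution of the blocks `v, v'`, with entries `A`, `B` left and right of the centres,
to the last sum `∑_j σ_j (∑_{k ≤ r'(j)} (n_{i_k} - n_{i_k - 1})) n_{j-1}` of `b₁(n)`: the index
`j` lies in block `v` and `i_k` in block `v'`. -/
def prefixForm (A B : ℕ → ℕ → ℤ) (m v v' : ℕ) : ℤ :=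
  ∑ w ∈ range m, ((B v' (w + 1) - A v' (if v' ≤ v then w + 1 else w)) * A v (w + 1) -
    (B v' (if v ≤ v' then w + 1 else w) - A v' w) * B v w)

/-- The contribution of the pairs `k < k'` with `i_k` in block `v` and `i_{k'}` in block `v'` to
the double sum over `k < k'` in `b₁(n)`; only the pairs with `i_k > i_{k'}` count. -/
def inversionForm (A B : ℕ → ℕ → ℤ) (m v v' : ℕ) : ℤ :=
  ∑ w ∈ range m, ((if v' < v then (A v w - A v (w + 1)) * (B v' m - B v' (w + 1)) else 0) -
    if v' ≤ v then (B v (w + 1) - B v w) * (A v' w - A v' m) else 0)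

/-- The summand of the double sum over `k < k'` in `b₁(n)` at `j = i_k`, `j' = i_{k'}`, extended
by zero to all `j, j'`. -/
def inversionTerm (l t : ℕ) (n : ℕ → ℕ) (j j' : ℕ) : ℤ :=
  if rpT l t j < rpT l t j' then
    (1 + Int.sign ((j : ℤ) - j')) / 2 * ((sigmaT l t j - sigmaT l t j') / 2) *
      ((n j : ℤ) - n (j - 1)) * ((n j' : ℤ) - n (j' - 1))
  else 0

theorem half_one_add_sign_sub {i j : ℕ} (hij : i ≠ j) :
    (1 + Int.sign ((i : ℤ) - j)) / 2 = if j < i then 1 else 0 := by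
  split_ifs with h
  · rw [Int.sign_eq_one_of_pos (by omega)]
    rfl
  · rw [Int.sign_eq_neg_one_of_neg (by omega)]
    rfl

theorem inversionTerm_eq_zero {l t j j' : ℕ} (hσ : sigmaT l t j = sigmaT l t j') (n : ℕ → ℕ) :
    inversionTerm l t n j j' = 0 := by
  simp [inversionTerm, hσ]

namespace DoubleTwist

variable {m p l t : ℕ} {n : ℕ → ℕ}

theorem sum_Icc_one_iT_sub (h : DoubleTwist m p l t) (n : ℕ → ℕ) {b : ℕ} (hb : b ≤ 2 * m * p)
    {a c : ℕ → ℕ} (ha : ∀ v, a v ≤ m) (hc : ∀ v, c v ≤ m)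
    (hright : ∀ v < p, ∀ w < m, rightIdx p w v ≤ b ↔ w < a v)
    (hleft : ∀ v < p, ∀ w < m, leftIdx p w v ≤ b ↔ w < c v) :
    ∑ k ∈ Icc 1 b, ((n (iT l t k) : ℤ) - n (iT l t k - 1)) =
      ∑ v ∈ range p, (rightEntry n m v (c v) - leftEntry n m v (a v)) := by
  rw [h.sum_Icc_iT_blocks le_rfl hb fun j => (n j : ℤ) - n (j - 1)]
  refine sum_congr rfl fun v hv => ?_
  calc _ = ∑ w ∈ range m,
        ((if w < c v then rightEntry n m v (w + 1) - rightEntry n m v w else 0) -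
          if w < a v then leftEntry n m v (w + 1) - leftEntry n m v w else 0) := by
        refine sum_congr rfl fun w hw => ?_
        rw [mem_range] at hv hw
        simp only [mem_Icc, (mem_Icc.1 (rightIdx_swap_mem hv hw)).1,
          (mem_Icc.1 (leftIdx_swap_mem hv hw)).1, true_and, hright v hv w hw, hleft v hv w hw,
          natCast_apply_leftIdx, natCast_apply_leftIdx_sub_one, natCast_apply_rightIdx,
          natCast_apply_rightIdx_sub_one]
        split_ifs <;> ring
    _ = _ := by
        rw [sum_sub_distrib, sum_range_ite_lt_sub _ (hc v), sum_range_ite_lt_sub _ (ha v),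
          rightEntry_zero]
        ring

theorem sum_prefix_leftIdx (h : DoubleTwist m p l t) (n : ℕ → ℕ) {v w : ℕ} (hv : v < p)
    (hw : w < m) :
    ∑ k ∈ Icc 1 (rpT l t (leftIdx m v w)), ((n (iT l t k) : ℤ) - n (iT l t k - 1)) =
      ∑ v' ∈ range p,
        (rightEntry n m v' (w + 1) - leftEntry n m v' (if v' ≤ v then w + 1 else w)) := by
  rw [h.rpT_leftIdx hv hw]
  refine h.sum_Icc_one_iT_sub n (mem_Icc.1 (rightIdx_swap_mem hv hw)).2
    (fun v' => by split_ifs <;> omega) (fun _ => hw) (fun v' hv' w' _ => ?_)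
    fun v' hv' w' _ => ?_
  · rw [← not_lt, rightIdx_lt_rightIdx_iff hv hv']
    split_ifs <;> omega
  · rw [← not_lt, rightIdx_lt_leftIdx_iff hv hv']
    omega

theorem sum_prefix_rightIdx (h : DoubleTwist m p l t) (n : ℕ → ℕ) {v w : ℕ} (hv : v < p)
    (hw : w < m) :
    ∑ k ∈ Icc 1 (rpT l t (rightIdx m v w)), ((n (iT l t k) : ℤ) - n (iT l t k - 1)) =
      ∑ v' ∈ range p,
        (rightEntry n m v' (if v ≤ v' then w + 1 else w) - leftEntry n m v' w) := by
  rw [h.rpT_rightIdx hv hw]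
  refine h.sum_Icc_one_iT_sub n (mem_Icc.1 (leftIdx_swap_mem hv hw)).2
    (fun _ => hw.le) (fun v' => by split_ifs <;> omega) (fun v' hv' w' _ => ?_)
    fun v' hv' w' _ => ?_
  · rw [← not_lt, leftIdx_lt_rightIdx_iff hv hv']
    omega
  · rw [← not_lt, leftIdx_lt_leftIdx_iff hv hv']
    split_ifs <;> omega

theorem sum_sigmaT_mul_prefix (h : DoubleTwist m p l t) (n : ℕ → ℕ) :
    ∑ j ∈ Icc 1 (2 * m * p), sigmaT l t j *
        (∑ k ∈ Icc 1 (rpT l t j), ((n (iT l t k) : ℤ) - n (iT l t k - 1))) * (n (j - 1) : ℤ) =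
      ∑ v ∈ range p, ∑ v' ∈ range p, prefixForm (leftEntry n m) (rightEntry n m) m v v' := by
  rw [sum_Icc_blocks]
  refine sum_congr rfl fun v hv => ?_
  simp only [prefixForm]
  rw [sum_comm]
  refine sum_congr rfl fun w hw => ?_
  rw [mem_range] at hv hw
  rw [h.sigmaT_leftIdx hv hw, h.sigmaT_rightIdx hv hw, h.sum_prefix_leftIdx n hv hw,
    h.sum_prefix_rightIdx n hv hw, natCast_apply_leftIdx_sub_one, natCast_apply_rightIdx_sub_one,
    sum_sub_distrib (f := fun v' => _ * leftEntry n m v (w + 1)), ← sum_mul, ← sum_mul]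
  ring

theorem inversionTerm_leftIdx_rightIdx (h : DoubleTwist m p l t) (n : ℕ → ℕ) {v w v' w' : ℕ}
    (hv : v < p) (hw : w < m) (hv' : v' < p) (hw' : w' < m) :
    inversionTerm l t n (leftIdx m v w) (rightIdx m v' w') =
      if v' < v then (leftEntry n m v w - leftEntry n m v (w + 1)) *
        (if w + 1 ≤ w' then rightEntry n m v' (w' + 1) - rightEntry n m v' w' else 0) else 0 := by
  have hne : leftIdx m v w ≠ rightIdx m v' w' := by
    have := leftIdx_lt_rightIdx_iff (v := v) (v' := v') hw hw'
    have := rightIdx_lt_leftIdx_iff (v := v') (v' := v) hw' hw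
    omega
  simp only [inversionTerm, h.rpT_leftIdx hv hw, h.rpT_rightIdx hv' hw',
    rightIdx_lt_leftIdx_iff hv hv', half_one_add_sign_sub hne, rightIdx_lt_leftIdx_iff hw' hw,
    h.sigmaT_leftIdx hv hw, h.sigmaT_rightIdx hv' hw', natCast_apply_leftIdx,
    natCast_apply_leftIdx_sub_one, natCast_apply_rightIdx, natCast_apply_rightIdx_sub_one]
  split_ifs <;> first | omega | norm_num

theorem inversionTerm_rightIdx_leftIdx (h : DoubleTwist m p l t) (n : ℕ → ℕ) {v w v' w' : ℕ}
    (hv : v < p) (hw : w < m) (hv' : v' < p) (hw' : w' < m) :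
    inversionTerm l t n (rightIdx m v w) (leftIdx m v' w') =
      if v' ≤ v then (rightEntry n m v (w + 1) - rightEntry n m v w) *
        (if w ≤ w' then leftEntry n m v' (w' + 1) - leftEntry n m v' w' else 0) else 0 := by
  have hne : rightIdx m v w ≠ leftIdx m v' w' := by
    have := leftIdx_lt_rightIdx_iff (v := v') (v' := v) hw' hw
    have := rightIdx_lt_leftIdx_iff (v := v) (v' := v') hw hw'
    omega
  simp only [inversionTerm, h.rpT_leftIdx hv' hw', h.rpT_rightIdx hv hw,
    leftIdx_lt_rightIdx_iff hv hv', half_one_add_sign_sub hne, leftIdx_lt_rightIdx_iff hw' hw,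
    h.sigmaT_leftIdx hv' hw', h.sigmaT_rightIdx hv hw, natCast_apply_leftIdx,
    natCast_apply_leftIdx_sub_one, natCast_apply_rightIdx, natCast_apply_rightIdx_sub_one]
  split_ifs <;> first | omega | norm_num
  ring

theorem sum_inversionTerm (h : DoubleTwist m p l t) (n : ℕ → ℕ) :
    ∑ j ∈ Icc 1 (2 * m * p), ∑ j' ∈ Icc 1 (2 * m * p), inversionTerm l t n j j' =
      ∑ v ∈ range p, ∑ v' ∈ range p, inversionForm (leftEntry n m) (rightEntry n m) m v v' := by
  simp only [sum_Icc_blocks, inversionForm]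
  refine sum_congr rfl fun v hv => ?_
  conv_rhs => rw [sum_comm]
  refine sum_congr rfl fun w hw => ?_
  rw [← sum_add_distrib]
  refine sum_congr rfl fun v' hv' => ?_
  rw [mem_range] at hv hw hv'
  calc _ = ∑ w' ∈ range m,
        ((if v' < v then (leftEntry n m v w - leftEntry n m v (w + 1)) *
          (if w + 1 ≤ w' then rightEntry n m v' (w' + 1) - rightEntry n m v' w' else 0) else 0) +
        if v' ≤ v then (rightEntry n m v (w + 1) - rightEntry n m v w) *
          (if w ≤ w' then leftEntry n m v' (w' + 1) - leftEntry n m v' w' else 0) else 0) := by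
        rw [← sum_add_distrib]
        refine sum_congr rfl fun w' hw' => ?_
        rw [mem_range] at hw'
        rw [inversionTerm_eq_zero ((h.sigmaT_leftIdx hv hw).trans (h.sigmaT_leftIdx hv' hw').symm),
          inversionTerm_eq_zero ((h.sigmaT_rightIdx hv hw).trans (h.sigmaT_rightIdx hv' hw').symm),
          h.inversionTerm_leftIdx_rightIdx n hv hw hv' hw',
          h.inversionTerm_rightIdx_leftIdx n hv hw hv' hw', zero_add, add_zero]
    _ = _ := by
        rw [sum_add_distrib]
        congr 1
        · split_ifs
          · rw [← mul_sum, sum_range_ite_le_sub _ hw]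
          · simp
        · split_ifs
          · rw [← mul_sum, sum_range_ite_le_sub _ hw.le]
            ring
          · simp

theorem sum_inversions (h : DoubleTwist m p l t) (n : ℕ → ℕ) :
    ∑ k ∈ Icc 1 (2 * m * p - 1), ∑ k' ∈ Icc (k + 1) (2 * m * p),
      ((1 + Int.sign ((iT l t k : ℤ) - (iT l t k' : ℤ))) / 2) *
        ((sigmaT l t (iT l t k) - sigmaT l t (iT l t k')) / 2) *
        ((n (iT l t k) : ℤ) - (n (iT l t k - 1) : ℤ)) *
        ((n (iT l t k') : ℤ) - (n (iT l t k' - 1) : ℤ)) =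
      ∑ v ∈ range p, ∑ v' ∈ range p, inversionForm (leftEntry n m) (rightEntry n m) m v v' := by
  have hreindex := sum_Icc_iT_lt h.odd_l h.odd_t h.coprime fun j j' =>
    (1 + Int.sign ((j : ℤ) - j')) / 2 * ((sigmaT l t j - sigmaT l t j') / 2) *
      ((n j : ℤ) - n (j - 1)) * ((n j' : ℤ) - n (j' - 1))
  rw [h.half_l] at hreindex
  rw [hreindex, ← h.sum_inversionTerm n]
  rfl

theorem b1T_add_b2T_eq (h : DoubleTwist m p l t) (h0 : n 0 = 0) :
    b1T l t n + b2T l t n =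
      ∑ v ∈ range p,
        (leftEntry n m v m + ∑ w ∈ range m, (leftEntry n m v w - rightEntry n m v w)) +
      ∑ v ∈ range p, ∑ v' ∈ range p,
        (prefixForm (leftEntry n m) (rightEntry n m) m v v' -
          inversionForm (leftEntry n m) (rightEntry n m) m v v') := by
  rw [b1T, h.half_l, h.half_sub, h.sum_half_one_sub_sigmaT_mul_pred, h.sum_pred_iT_large,
    h.sum_half_one_add_sigmaT_mul, h.sum_half_sigmaT_sub h0, h.sum_inversions,
    h.sum_sigmaT_mul_prefix, h.aT_eq h0, h.b2T_eq, h.sigmaT_last]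
  simp only [sum_add_distrib, sum_sub_distrib]
  ring

end DoubleTwist

section Multiples

variable {m v w : ℕ}

theorem dvd_leftIdx_iff (hw : w < m) : m ∣ leftIdx m v w ↔ w = 0 := by
  have hdvd : m ∣ 2 * m * v + m := dvd_add ((dvd_mul_left m 2).mul_right v) dvd_rfl
  rw [leftIdx, Nat.dvd_sub_iff_right (by omega) hdvd]
  exact ⟨fun h => Nat.eq_zero_of_dvd_of_lt h hw, fun h => h ▸ dvd_zero m⟩

theorem dvd_rightIdx_iff (hw : w < m) : m ∣ rightIdx m v w ↔ w + 1 = m := by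
  have hdvd : m ∣ 2 * m * v + m := dvd_add ((dvd_mul_left m 2).mul_right v) dvd_rfl
  rw [rightIdx, add_assoc, Nat.dvd_add_right hdvd]
  exact ⟨fun h => (Nat.succ_le_of_lt hw).antisymm (Nat.le_of_dvd w.succ_pos h),
    fun h => h ▸ dvd_rfl⟩

theorem sum_filter_not_dvd {M : Type*} [AddCommMonoid M] (m p : ℕ) (F : ℕ → M) :
    ∑ i ∈ Icc 1 (2 * m * p) with ¬ m ∣ i, F i =
      ∑ v ∈ range p, ∑ u ∈ range (m - 1), (F (leftIdx m v (u + 1)) + F (rightIdx m v u)) := by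
  rw [sum_filter, sum_Icc_blocks]
  refine sum_congr rfl fun v _ => ?_
  rcases m with _ | M
  · simp
  rw [Nat.add_sub_cancel, sum_add_distrib, sum_range_succ', sum_range_succ, sum_add_distrib]
  have hleft : ∀ u ∈ range M, ¬ M + 1 ∣ leftIdx (M + 1) v (u + 1) := fun u hu =>
    mt (dvd_leftIdx_iff (Nat.succ_lt_succ (mem_range.1 hu))).1 u.succ_ne_zero
  have hright : ∀ u ∈ range M, ¬ M + 1 ∣ rightIdx (M + 1) v u := fun u hu => by
    rw [mem_range] at hu
    rw [dvd_rightIdx_iff (by omega)]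
    omega
  rw [sum_congr rfl fun u hu => if_pos (hleft u hu), sum_congr rfl fun u hu => if_pos (hright u hu),
    if_neg (not_not.2 ((dvd_leftIdx_iff M.succ_pos).2 rfl)),
    if_neg (not_not.2 ((dvd_rightIdx_iff M.lt_succ_self).2 rfl)), add_zero, add_zero]

@[to_additive]
theorem prod_Icc_pairs {M : Type*} [CommMonoid M] {F : ℕ → M} (hF : F 0 = 1) (p : ℕ) :
    ∏ i ∈ Icc 1 (2 * p - 1), F i = ∏ v ∈ range p, (F (2 * v) * F (2 * v + 1)) := by
  have hrange : ∏ i ∈ range (2 * p), F i = ∏ v ∈ range p, (F (2 * v) * F (2 * v + 1)) := by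
    induction p with
    | zero => rfl
    | succ p ih =>
      rw [mul_add_one, prod_range_succ, prod_range_succ, prod_range_succ, ih, mul_assoc]
  rw [← hrange, prod_Icc_eq_prod_range_succ]
  rcases p with _ | p
  · rfl
  · rw [mul_add_one, prod_range_succ', hF, mul_one]
    rfl

end Multiples

section Beta

variable {m v u : ℕ}

theorem betLO_eq_zero {i : ℕ} (hi : m ∣ i) : betLO m i = 0 := by
  obtain ⟨k, rfl⟩ := hi
  rw [betLO, mul_comm 2 m, Nat.mul_mod_mul_left]
  rcases Nat.mod_two_eq_zero_or_one k with hk | hk <;> rw [hk, if_neg (by omega), if_neg (by omega)]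

theorem betLO_leftIdx (hu : u + 1 < m) : betLO m (leftIdx m v (u + 1)) = 1 := by
  rw [betLO, leftIdx, Nat.add_sub_assoc hu.le, Nat.mul_add_mod, Nat.mod_eq_of_lt (by omega),
    if_pos (by omega)]

theorem betLO_rightIdx (hu : u + 1 < m) : betLO m (rightIdx m v u) = -1 := by
  rw [betLO, rightIdx, add_assoc, add_assoc, Nat.mul_add_mod, Nat.mod_eq_of_lt (by omega),
    if_neg (by omega), if_pos (by omega)]

theorem sum_betLO_mul (m p : ℕ) (n : ℕ → ℕ) :
    ∑ i ∈ Icc 1 (2 * m * p - 1), betLO m i * (n i : ℤ) =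
      ∑ v ∈ range p, ∑ w ∈ range m, (leftEntry n m v w - rightEntry n m v w) := by
  have hfilter : ∑ i ∈ Icc 1 (2 * m * p - 1), betLO m i * (n i : ℤ) =
      ∑ i ∈ Icc 1 (2 * m * p) with ¬ m ∣ i, betLO m i * (n i : ℤ) := by
    have hsupp : ∀ i ∈ Icc 1 (2 * m * p), betLO m i * (n i : ℤ) ≠ 0 → ¬ m ∣ i :=
      fun i _ hi hdvd => hi (by rw [betLO_eq_zero hdvd, zero_mul])
    rw [sum_filter_of_ne hsupp]
    refine sum_subset (Icc_subset_Icc_right (Nat.sub_le _ _)) fun i hi hi' => ?_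
    obtain rfl : i = 2 * m * p := by
      simp only [mem_Icc] at hi hi'
      omega
    rw [betLO_eq_zero ((dvd_mul_left m 2).mul_right p), zero_mul]
  rw [hfilter, sum_filter_not_dvd]
  refine sum_congr rfl fun v _ => ?_
  rcases m with _ | M
  · simp
  rw [Nat.add_sub_cancel, sum_range_succ', rightEntry_zero, sub_self, add_zero]
  refine sum_congr rfl fun u hu => ?_
  have hu := Nat.succ_lt_succ (mem_range.1 hu)
  rw [betLO_leftIdx hu, betLO_rightIdx hu, natCast_apply_leftIdx, natCast_apply_rightIdx]
  ring

end Beta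

section Delta

variable {m p v v' w u : ℕ}

theorem two_mul_dvd_iff {x : ℤ} (c y : ℤ) (hx : x = 2 * m * c + y)
    (hy : y ∈ Set.Ioo (-(2 * m) : ℤ) (2 * m)) : (2 * (m : ℤ)) ∣ x ↔ y = 0 := by
  rw [hx, Int.dvd_add_right (dvd_mul_right _ _)]
  refine ⟨fun hd => Int.eq_zero_of_abs_lt_dvd hd (abs_lt.2 hy), ?_⟩
  rintro rfl
  exact dvd_zero _

theorem deltaLO_eq {i j : ℕ} (hdvd : ¬ m ∣ i) (ci xi cj xj : ℤ)
    (hi : (i : ℤ) = 2 * m * ci + m + xi) (hj : (j : ℤ) = 2 * m * cj + m + xj)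
    (hxi : xi ∈ Set.Ioo (-m : ℤ) m) (hxj : xj ∈ Set.Ioc (-m : ℤ) m) :
    deltaLO m i j = if xi + xj = 0 ∨ xi + xj = 1 then 1
      else if xj = xi ∨ xj = xi + 1 then -1 else 0 := by
  obtain ⟨hxi, hxi'⟩ := hxi
  obtain ⟨hxj, hxj'⟩ := hxj
  have hi0 : i ≠ 0 := fun h => hdvd (h ▸ dvd_zero m)
  have hsum : 2 * m ∣ i + j ↔ xi + xj = 0 := by
    rw [← Int.natCast_dvd_natCast]
    push_cast
    exact two_mul_dvd_iff (ci + cj + 1) _ (by rw [hi, hj]; ring) ⟨by omega, by omega⟩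
  have hsum_sub : 2 * m ∣ i + j - 1 ↔ xi + xj - 1 = 0 := by
    rw [← Int.natCast_dvd_natCast, Nat.cast_sub (by omega)]
    push_cast
    exact two_mul_dvd_iff (ci + cj + 1) _ (by rw [hi, hj]; ring) ⟨by omega, by omega⟩
  have hdiff : 2 * (m : ℤ) ∣ (j : ℤ) - i ↔ xj - xi = 0 :=
    two_mul_dvd_iff (cj - ci) _ (by rw [hi, hj]; ring) ⟨by omega, by omega⟩
  have hdiff_sub : 2 * (m : ℤ) ∣ (j : ℤ) - i - 1 ↔ xj - xi - 1 = 0 :=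
    two_mul_dvd_iff (cj - ci) _ (by rw [hi, hj]; ring) ⟨by omega, by omega⟩
  rw [deltaLO, if_neg hdvd]
  exact if_congr (by rw [hsum, hsum_sub]; omega) rfl
    (if_congr (by rw [hdiff, hdiff_sub]; omega) rfl rfl)

theorem deltaLO_leftIdx_leftIdx (hu : u + 1 < m) (hw : w < m) :
    deltaLO m (leftIdx m v (u + 1)) (leftIdx m v' w) = if w = u ∨ w = u + 1 then -1 else 0 := by
  rw [deltaLO_eq (by rw [dvd_leftIdx_iff hu]; omega) v (-(u + 1)) v' (-w)
    (by rw [natCast_leftIdx hu.le]; push_cast; ring) (by rw [natCast_leftIdx hw.le]; ring)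
    ⟨by omega, by omega⟩ ⟨by omega, by omega⟩, if_neg (by omega)]
  exact if_congr (by omega) rfl rfl

theorem deltaLO_leftIdx_rightIdx (hu : u + 1 < m) (hw : w < m) :
    deltaLO m (leftIdx m v (u + 1)) (rightIdx m v' w) = if w = u ∨ w = u + 1 then 1 else 0 := by
  rw [deltaLO_eq (by rw [dvd_leftIdx_iff hu]; omega) v (-(u + 1)) v' (w + 1)
    (by rw [natCast_leftIdx hu.le]; push_cast; ring) (by rw [natCast_rightIdx]; ring)
    ⟨by omega, by omega⟩ ⟨by omega, by omega⟩]
  split_ifs <;> omega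

theorem deltaLO_rightIdx_leftIdx (hu : u + 1 < m) (hw : w < m) :
    deltaLO m (rightIdx m v u) (leftIdx m v' w) = if w = u ∨ w = u + 1 then 1 else 0 := by
  rw [deltaLO_eq (by rw [dvd_rightIdx_iff (by omega)]; omega) v (u + 1) v' (-w)
    (by rw [natCast_rightIdx]; ring) (by rw [natCast_leftIdx hw.le]; ring)
    ⟨by omega, by omega⟩ ⟨by omega, by omega⟩]
  split_ifs <;> omega

theorem deltaLO_rightIdx_rightIdx (hu : u + 1 < m) (hw : w < m) :
    deltaLO m (rightIdx m v u) (rightIdx m v' w) = if w = u ∨ w = u + 1 then -1 else 0 := by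
  rw [deltaLO_eq (by rw [dvd_rightIdx_iff (by omega)]; omega) v (u + 1) v' (w + 1)
    (by rw [natCast_rightIdx]; ring) (by rw [natCast_rightIdx]; ring)
    ⟨by omega, by omega⟩ ⟨by omega, by omega⟩, if_neg (by omega)]
  exact if_congr (by omega) rfl rfl

theorem sum_range_ite_eq_or_eq_succ (hu : u + 1 < m) (g : ℕ → ℤ) :
    ∑ w ∈ range m, (if w = u ∨ w = u + 1 then g w else 0) = g u + g (u + 1) := by
  have hfilter : {w ∈ range m | w = u ∨ w = u + 1} = {u, u + 1} := by
    ext w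
    simp only [mem_filter, mem_range, mem_insert, mem_singleton]
    omega
  rw [← sum_filter, hfilter, sum_pair u.lt_succ_self.ne]

theorem sum_Icc_succ_blocks (m p i : ℕ) (F : ℕ → ℤ) :
    ∑ j ∈ Icc (i + 1) (2 * m * p), F j = ∑ v ∈ range p, ∑ w ∈ range m,
      ((if i < leftIdx m v w then F (leftIdx m v w) else 0) +
        if i < rightIdx m v w then F (rightIdx m v w) else 0) := by
  have hfilter : Icc (i + 1) (2 * m * p) = {j ∈ Icc 1 (2 * m * p) | i < j} := by
    ext j
    simp only [mem_filter, mem_Icc]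
    omega
  rw [hfilter, sum_filter, sum_Icc_blocks]

theorem sum_deltaLO_leftIdx (hu : u + 1 < m) (n : ℕ → ℕ) :
    ∑ j ∈ Icc (leftIdx m v (u + 1) + 1) (2 * m * p),
        deltaLO m (leftIdx m v (u + 1)) j * (n j : ℤ) =
      ∑ v' ∈ range p, ((if v ≤ v' then rightEntry n m v' (u + 1) + rightEntry n m v' (u + 2) else 0)
        - (if v ≤ v' then leftEntry n m v' u else 0)
        - if v < v' then leftEntry n m v' (u + 1) else 0) := by
  rw [sum_Icc_succ_blocks]
  refine sum_congr rfl fun v' _ => ?_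
  calc _ = ∑ w ∈ range m, (if w = u ∨ w = u + 1 then
        (if v ≤ v' then rightEntry n m v' (w + 1) else 0) -
          (if v < v' ∨ v = v' ∧ w < u + 1 then leftEntry n m v' w else 0) else 0) := by
        refine sum_congr rfl fun w hw => ?_
        rw [mem_range] at hw
        simp only [leftIdx_lt_leftIdx_iff hu hw, leftIdx_lt_rightIdx_iff hu hw,
          deltaLO_leftIdx_leftIdx hu hw, deltaLO_leftIdx_rightIdx hu hw, natCast_apply_leftIdx,
          natCast_apply_rightIdx]
        split_ifs <;> ring
    _ = _ := by
        rw [sum_range_ite_eq_or_eq_succ hu]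
        split_ifs <;> first | omega | ring

theorem sum_deltaLO_rightIdx (hu : u + 1 < m) (n : ℕ → ℕ) :
    ∑ j ∈ Icc (rightIdx m v u + 1) (2 * m * p), deltaLO m (rightIdx m v u) j * (n j : ℤ) =
      ∑ v' ∈ range p, ((if v < v' then leftEntry n m v' u + leftEntry n m v' (u + 1) else 0)
        - (if v < v' then rightEntry n m v' (u + 1) else 0)
        - if v ≤ v' then rightEntry n m v' (u + 2) else 0) := by
  rw [sum_Icc_succ_blocks]
  refine sum_congr rfl fun v' _ => ?_
  calc _ = ∑ w ∈ range m, (if w = u ∨ w = u + 1 then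
        (if v < v' then leftEntry n m v' w else 0) -
          (if v < v' ∨ v = v' ∧ u < w then rightEntry n m v' (w + 1) else 0) else 0) := by
        refine sum_congr rfl fun w hw => ?_
        rw [mem_range] at hw
        have hum := Nat.lt_of_succ_lt hu
        simp only [rightIdx_lt_leftIdx_iff hum hw, rightIdx_lt_rightIdx_iff hum hw,
          deltaLO_rightIdx_leftIdx hu hw, deltaLO_rightIdx_rightIdx hu hw, natCast_apply_leftIdx,
          natCast_apply_rightIdx]
        split_ifs <;> ring
    _ = _ := by
        rw [sum_range_ite_eq_or_eq_succ hu]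
        split_ifs <;> first | omega | ring

end Delta

/-- The contribution of the indices `i` in block `v` and `j` in block `v'` to the quadratic form
`∑_{i < j, m ∤ i} Δ_{i,j,m} n_i n_j`, for blocks with entries `A`, `B` left and right of the
centres. -/
def deltaForm (A B : ℕ → ℕ → ℤ) (m v v' : ℕ) : ℤ :=
  ∑ u ∈ range (m - 1),
    if v < v' then (A v (u + 1) - B v (u + 1)) *
      ((B v' (u + 1) - A v' u) + (B v' (u + 2) - A v' (u + 1)))
    else if v = v' then
      A v (u + 1) * (B v (u + 1) + B v (u + 2) - A v u) - B v (u + 1) * B v (u + 2)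
    else 0

theorem sum_deltaLO_mul (m p : ℕ) (n : ℕ → ℕ) :
    ∑ i ∈ Icc 1 (2 * m * p) with ¬ m ∣ i, ∑ j ∈ Icc (i + 1) (2 * m * p),
        deltaLO m i j * (n i : ℤ) * (n j : ℤ) =
      ∑ v ∈ range p, ∑ v' ∈ range p, deltaForm (leftEntry n m) (rightEntry n m) m v v' := by
  have hrow : ∀ i, ∑ j ∈ Icc (i + 1) (2 * m * p), deltaLO m i j * (n i : ℤ) * (n j : ℤ) =
      n i * ∑ j ∈ Icc (i + 1) (2 * m * p), deltaLO m i j * (n j : ℤ) := fun i => by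
    rw [mul_sum]
    exact sum_congr rfl fun j _ => by ring
  rw [sum_filter_not_dvd]
  refine sum_congr rfl fun v _ => ?_
  simp only [deltaForm]
  rw [sum_comm (s := range p)]
  refine sum_congr rfl fun u hu => ?_
  have hu : u + 1 < m := by rw [mem_range] at hu; omega
  rw [hrow, hrow, sum_deltaLO_leftIdx hu, sum_deltaLO_rightIdx hu, mul_sum, mul_sum,
    ← sum_add_distrib]
  refine sum_congr rfl fun v' _ => ?_
  rw [natCast_apply_leftIdx, natCast_apply_rightIdx]
  rcases lt_trichotomy v v' with hv | rfl | hv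
  · simp only [hv, hv.le, if_true]
    ring
  · simp only [le_refl, lt_irrefl, if_true, if_false]
    ring
  · simp only [hv.not_ge, hv.not_gt, hv.ne', if_false]
    ring

/-- The integer `x(x + 1)/2`. -/
def triangle (x : ℤ) : ℤ := x * (x + 1) / 2

theorem two_mul_triangle (x : ℤ) : 2 * triangle x = x * (x + 1) :=
  Int.two_mul_ediv_two_of_even x.even_mul_succ_self

theorem triangle_add (x y : ℤ) : triangle (x + y) = triangle x + triangle y + x * y := by
  linarith [two_mul_triangle x, two_mul_triangle y, two_mul_triangle (x + y)]

theorem sum_triangle_sub (A : ℕ → ℤ) (m : ℕ) :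
    ∑ w ∈ range m, triangle (A w - A (w + 1)) =
      triangle (A 0) - triangle (A m) - ∑ w ∈ range m, A (w + 1) * (A w - A (w + 1)) := by
  rw [← sum_range_sub' (fun w => triangle (A w)), ← sum_sub_distrib]
  refine sum_congr rfl fun w _ => ?_
  have hadd := triangle_add (A w - A (w + 1)) (A (w + 1))
  rw [sub_add_cancel] at hadd
  linarith

theorem sum_square_eq (f : ℕ → ℕ → ℤ) (p : ℕ) :
    ∑ v ∈ range p, ∑ v' ∈ range p, f v v' =
      ∑ b ∈ range p, (f b b + ∑ a ∈ range b, (f a b + f b a)) := by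
  induction p with
  | zero => simp
  | succ p ih =>
    rw [sum_range_succ (fun b => f b b + _), ← ih, sum_range_succ (fun v => ∑ v' ∈ _, f v v')]
    simp only [sum_range_succ _ p, sum_add_distrib]
    ring

theorem sum_range_pred_mul_add_succ (f g : ℕ → ℤ) (m : ℕ) (h0 : f 0 = 0) :
    ∑ u ∈ range (m - 1), f (u + 1) * (g u + g (u + 1)) =
      ∑ w ∈ range m, (f (w + 1) + f w) * g w - f m * g (m - 1) := by
  rcases m with _ | M
  · simp [h0]
  simp only [Nat.add_sub_cancel, add_mul, mul_add, sum_add_distrib]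
  rw [sum_range_succ (fun w => f (w + 1) * g w), sum_range_succ' (fun w => f w * g w), h0]
  ring

section QuadraticForms

variable {A B : ℕ → ℕ → ℤ} {m a b : ℕ}

theorem deltaForm_of_lt (hm : 0 < m) (hab : a < b) (hAB : A a 0 = B a 0) :
    deltaForm A B m a b =
      ∑ w ∈ range m, (A a (w + 1) - B a (w + 1) + (A a w - B a w)) * (B b (w + 1) - A b w) -
        (A a m - B a m) * (B b m - A b (m - 1)) := by
  have hshift := sum_range_pred_mul_add_succ (fun w => A a w - B a w)
    (fun w => B b (w + 1) - A b w) m (sub_eq_zero.2 hAB)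
  rw [Nat.sub_add_cancel hm] at hshift
  simp only [deltaForm, hab, if_true]
  exact hshift

theorem deltaForm_of_gt (hab : a < b) : deltaForm A B m b a = 0 := by
  simp [deltaForm, hab.not_gt, hab.ne']

theorem deltaForm_self (hm : 0 < m) (hAB : A b 0 = B b 0) :
    deltaForm A B m b b =
      ∑ w ∈ range m, ((A b w - B b w) * B b (w + 1) + A b (w + 1) * (B b (w + 1) - A b w)) -
        A b m * (B b m - A b (m - 1)) := by
  obtain ⟨M, rfl⟩ := Nat.exists_eq_succ_of_ne_zero hm.ne'
  simp only [deltaForm, lt_irrefl, if_true, if_false, Nat.succ_eq_add_one, Nat.add_sub_cancel]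
  rw [sum_add_distrib, sum_range_succ', sum_range_succ (fun w => A b (w + 1) * _), hAB, sub_self,
    zero_mul, add_zero, ← add_assoc, add_sub_cancel_right, ← sum_add_distrib]
  exact sum_congr rfl fun u _ => by ring

theorem prefixForm_sub_inversionForm_sub_deltaForm_of_lt (hm : 0 < m) (hab : a < b)
    (hAB : ∀ v, A v 0 = B v 0) :
    (prefixForm A B m a b - inversionForm A B m a b - deltaForm A B m a b) +
        (prefixForm A B m b a - inversionForm A B m b a - deltaForm A B m b a) =
      (B a m - A a m) * (A b m + A b (m - 1) - A b 0) := by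
  have htele := sum_range_sub
    (fun w => B b w * B a w - A b w * A a w + A b w * B a m - B b w * A a m) m
  have hsummand : prefixForm A B m a b + prefixForm A B m b a - inversionForm A B m b a -
      ∑ w ∈ range m, (A a (w + 1) - B a (w + 1) + (A a w - B a w)) * (B b (w + 1) - A b w) =
        ∑ w ∈ range m, ((B b (w + 1) * B a (w + 1) - A b (w + 1) * A a (w + 1) +
          A b (w + 1) * B a m - B b (w + 1) * A a m) -
          (B b w * B a w - A b w * A a w + A b w * B a m - B b w * A a m)) := by
    simp only [prefixForm, inversionForm, hab.le, hab, hab.not_ge, if_true, if_false]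
    rw [← sum_add_distrib, ← sum_sub_distrib, ← sum_sub_distrib]
    exact sum_congr rfl fun w _ => by ring
  have hinv : inversionForm A B m a b = 0 := by simp [inversionForm, hab.not_ge, hab.not_gt]
  rw [deltaForm_of_lt hm hab (hAB a), deltaForm_of_gt hab, hinv]
  rw [htele, ← hAB, ← hAB] at hsummand
  linear_combination hsummand

theorem prefixForm_sub_inversionForm_sub_deltaForm_self (hm : 0 < m) (hAB : ∀ v, A v 0 = B v 0) :
    prefixForm A B m b b - inversionForm A B m b b - deltaForm A B m b b =
      ∑ w ∈ range m, A b (w + 1) * (A b w - A b (w + 1)) - A b m * (A b (m - 1) - A b 0) := by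
  have hsummand : prefixForm A B m b b - inversionForm A B m b b -
      ∑ w ∈ range m, ((A b w - B b w) * B b (w + 1) + A b (w + 1) * (B b (w + 1) - A b w)) =
        ∑ w ∈ range m, (A b (w + 1) * (A b w - A b (w + 1)) - (B b (w + 1) - B b w) * A b m) := by
    simp only [prefixForm, inversionForm, le_refl, lt_irrefl, if_true, if_false]
    rw [← sum_sub_distrib, ← sum_sub_distrib]
    exact sum_congr rfl fun w _ => by ring
  rw [deltaForm_self hm (hAB b)]
  rw [sum_sub_distrib, ← sum_mul, sum_range_sub, ← hAB] at hsummand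
  linear_combination hsummand

theorem sum_prefixForm_sub_inversionForm (hm : 0 < m) (hAB : ∀ v, A v 0 = B v 0)
    (htele : ∀ b, ∑ v ∈ range b, (B v m - A v m) = A b m) (p : ℕ) :
    ∑ v ∈ range p, ∑ v' ∈ range p, (prefixForm A B m v v' - inversionForm A B m v v') =
      ∑ v ∈ range p, ∑ v' ∈ range p, deltaForm A B m v v' +
      ∑ v ∈ range p, (A v m * A v m + ∑ w ∈ range m, A v (w + 1) * (A v w - A v (w + 1))) := by
  rw [← sub_eq_iff_eq_add']
  simp only [← sum_sub_distrib]
  rw [sum_square_eq]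
  refine sum_congr rfl fun b _ => ?_
  rw [prefixForm_sub_inversionForm_sub_deltaForm_self hm hAB, sum_congr rfl fun a ha =>
    prefixForm_sub_inversionForm_sub_deltaForm_of_lt hm (mem_range.1 ha) hAB, ← sum_mul, htele]
  ring

end QuadraticForms

theorem natCast_apply_mul_two_mul (n : ℕ → ℕ) (m v : ℕ) :
    (n (m * (2 * v)) : ℤ) = leftEntry n m v m := by
  rw [leftEntry, leftIdx, Nat.add_sub_cancel, mul_left_comm, mul_assoc]

theorem natCast_apply_mul_two_mul_add_one (n : ℕ → ℕ) (m v : ℕ) :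
    (n (m * (2 * v + 1)) : ℤ) = leftEntry n m v 0 := by
  rw [leftEntry, leftIdx, Nat.sub_zero, mul_add_one, mul_left_comm, mul_assoc]

theorem sum_multiples_exponent {n : ℕ → ℕ} (h0 : n 0 = 0) (m p : ℕ) (N : ℤ) :
    ∑ i ∈ Icc 1 (2 * p - 1), ((-1) ^ (i + 1) * N * n (m * i) + triangle (n (m * i))) =
      ∑ v ∈ range p, (N * (leftEntry n m v 0 - leftEntry n m v m) +
        triangle (leftEntry n m v 0) + triangle (leftEntry n m v m)) := by
  rw [sum_Icc_pairs (by simp [h0, triangle])]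
  refine sum_congr rfl fun v _ => ?_
  rw [natCast_apply_mul_two_mul, natCast_apply_mul_two_mul_add_one,
    (even_two_mul v).add_one.neg_one_pow, ((even_two_mul v).add_one.add_one).neg_one_pow]
  ring

theorem DoubleTwist.exponent_eq {m p l t : ℕ} {n : ℕ → ℕ} (h : DoubleTwist m p l t) (h0 : n 0 = 0)
    (N : ℤ) :
    aT l t n * N + b1T l t n + b2T l t n +
        ∑ v ∈ range p, ∑ w ∈ range m, triangle (leftEntry n m v w - leftEntry n m v (w + 1)) =
      ∑ i ∈ Icc 1 (2 * m * p) with ¬ m ∣ i, ∑ j ∈ Icc (i + 1) (2 * m * p),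
          deltaLO m i j * (n i : ℤ) * (n j : ℤ) +
        ∑ i ∈ Icc 1 (2 * p - 1), ((-1) ^ (i + 1) * N * n (m * i) + triangle (n (m * i))) +
        ∑ i ∈ Icc 1 (2 * m * p - 1), betLO m i * (n i : ℤ) := by
  have hquad := sum_prefixForm_sub_inversionForm h.m_pos (fun v => (rightEntry_zero n m v).symm)
    (sum_rightEntry_self_sub h0 m) p
  have hdiag : ∀ v ∈ range p, triangle (leftEntry n m v m) + triangle (leftEntry n m v m) =
      leftEntry n m v m * leftEntry n m v m + leftEntry n m v m := fun v _ => by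
    rw [← two_mul, two_mul_triangle]
    ring
  replace hdiag := sum_congr rfl hdiag
  rw [add_assoc (_ * N), h.b1T_add_b2T_eq h0, h.aT_eq h0, hquad, sum_deltaLO_mul, sum_betLO_mul,
    sum_multiples_exponent h0]
  simp only [sum_triangle_sub, sum_add_distrib, sum_sub_distrib, mul_sub, ← mul_sum] at hdiag ⊢
  linear_combination -hdiag

theorem prod_zpow_eq_zpow_sum {ι G₀ : Type*} [CommGroupWithZero G₀] {q : G₀} (hq : q ≠ 0)
    (s : Finset ι) (f : ι → ℤ) : ∏ i ∈ s, q ^ f i = q ^ ∑ i ∈ s, f i := by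
  classical
  induction s using Finset.induction_on with
  | empty => simp
  | insert a s ha ih => rw [prod_insert ha, sum_insert ha, zpow_add₀ hq, ih]

theorem prod_neg_one_pow_sub {R : Type*} [CommRing R] (a : ℕ → ℕ) (K : ℕ)
    (ha : ∀ w < K, a w ≤ a (w + 1)) :
    ∏ w ∈ range K, (-1 : R) ^ (a (w + 1) - a w) = (-1) ^ a 0 * (-1) ^ a K := by
  induction K with
  | zero => rw [prod_range_zero, ← mul_pow, neg_one_mul, neg_neg, one_pow]
  | succ K ih =>
    rw [prod_range_succ, ih fun w hw => ha w (Nat.lt_succ_of_lt hw), mul_assoc, ← pow_add,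
      Nat.add_sub_cancel' (ha K K.lt_succ_self)]

theorem qPoch_succ (a q : ℂ) (n : ℕ) : qPoch a q (n + 1) = qPoch a q n * (1 - a * q ^ n) :=
  prod_range_succ _ n

theorem qPoch_ne_zero_of_le {a q : ℂ} {k n : ℕ} (hkn : k ≤ n) (hn : qPoch a q n ≠ 0) :
    qPoch a q k ≠ 0 := by
  rw [qPoch, prod_ne_zero_iff] at *
  exact fun i hi => hn i (range_subset_range.2 hkn hi)

theorem gaussPoly_eq_zero_of_lt {n k : ℕ} (hnk : n < k) : gaussPoly n k = 0 := by
  induction n generalizing k with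
  | zero =>
    obtain ⟨k, rfl⟩ := Nat.exists_eq_succ_of_ne_zero hnk.ne'
    rw [gaussPoly]
  | succ n ih =>
    obtain ⟨k, rfl⟩ := Nat.exists_eq_succ_of_ne_zero (Nat.ne_zero_of_lt hnk)
    have hnk := Nat.lt_of_succ_lt_succ hnk
    rw [gaussPoly, ih hnk, ih (Nat.lt_succ_of_lt hnk), mul_zero, add_zero]

theorem gbin_zero_right (q : ℂ) (n : ℕ) : gbin q n 0 = 1 := by
  rw [gbin, gaussPoly, map_one]

theorem gbin_eq_zero_of_lt (q : ℂ) {n k : ℕ} (hnk : n < k) : gbin q n k = 0 := by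
  rw [gbin, gaussPoly_eq_zero_of_lt hnk, map_zero]

theorem gbin_succ_succ (q : ℂ) (n k : ℕ) :
    gbin q (n + 1) (k + 1) = gbin q n k + q ^ (k + 1) * gbin q n (k + 1) := by
  simp only [gbin, gaussPoly, map_add, map_mul, map_pow, Polynomial.aeval_X]

theorem gbin_mul_qPoch (q : ℂ) (k a : ℕ) :
    gbin q (k + a) k * (qPoch q q k * qPoch q q a) = qPoch q q (k + a) := by
  induction k generalizing a with
  | zero => rw [gbin_zero_right, zero_add, qPoch, range_zero, prod_empty, one_mul, one_mul]
  | succ k ihk =>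
    induction a with
    | zero =>
      have hk := ihk 0
      rw [add_zero] at hk ⊢
      rw [gbin_succ_succ, gbin_eq_zero_of_lt q k.lt_succ_self, qPoch_succ]
      linear_combination (1 - q * q ^ k) * hk
    | succ a iha =>
      have hk := ihk (a + 1)
      rw [show k + 1 + a = k + (a + 1) by ring] at iha
      rw [show k + 1 + (a + 1) = k + (a + 1) + 1 by ring, gbin_succ_succ,
        qPoch_succ _ _ (k + (a + 1)), qPoch_succ _ _ k]
      rw [qPoch_succ _ _ k] at iha
      rw [qPoch_succ _ _ a] at hk ⊢
      linear_combination (1 - q * q ^ k) * hk + q ^ (k + 1) * (1 - q * q ^ a) * iha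

theorem prod_gbin_mul_prod_qPoch (q : ℂ) {n : ℕ → ℕ} (h0 : n 0 = 0) (K : ℕ)
    (hn : ∀ i ≤ K, n i ≤ n (i + 1)) :
    (∏ i ∈ Icc 1 K, gbin q (n (i + 1)) (n i)) * ∏ j ∈ Icc 1 (K + 1), qPoch q q (n j - n (j - 1)) =
      qPoch q q (n (K + 1)) := by
  induction K with
  | zero => simp [h0]
  | succ K ih =>
    have hgbin := gbin_mul_qPoch q (n (K + 1)) (n (K + 1 + 1) - n (K + 1))
    rw [Nat.add_sub_cancel' (hn (K + 1) le_rfl),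
      ← ih fun i hi => hn i (hi.trans K.le_succ)] at hgbin
    rw [prod_Icc_succ_top (Nat.le_add_left 1 K),
      prod_Icc_succ_top (Nat.le_add_left 1 (K + 1)) (fun j => qPoch q q (n j - n (j - 1))),
      Nat.add_sub_cancel, ← hgbin]
    ring

theorem qPoch_zpow_one_sub_mul {q : ℂ} (hq : q ≠ 0) {N n : ℕ} (hn : n < N) :
    qPoch (q ^ (1 - (N : ℤ))) q n * qPoch q q (N - n - 1) =
      (-1) ^ n * q ^ (-(N : ℤ) * n + triangle n) * qPoch q q (N - 1) := by
  induction n with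
  | zero => simp [qPoch, triangle]
  | succ n ih =>
    have hlast : qPoch q q (N - n - 1) =
        qPoch q q (N - (n + 1) - 1) * (1 - q ^ ((N : ℤ) - n - 1)) := by
      obtain ⟨a, rfl⟩ := Nat.exists_eq_add_of_lt hn
      rw [show n + 1 + a + 1 - n - 1 = a + 1 by omega,
        show n + 1 + a + 1 - (n + 1) - 1 = a by omega, qPoch_succ,
        show ((n + 1 + a + 1 : ℕ) : ℤ) - n - 1 = (a + 1 : ℕ) by push_cast; ring, zpow_natCast,
        pow_succ']
    have hfactor : 1 - q ^ (1 - (N : ℤ)) * q ^ n =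
        -q ^ (n + 1 - (N : ℤ)) * (1 - q ^ ((N : ℤ) - n - 1)) := by
      rw [mul_sub, mul_one, neg_mul, ← zpow_add₀ hq, ← zpow_natCast, ← zpow_add₀ hq,
        show (n + 1 - (N : ℤ)) + ((N : ℤ) - n - 1) = 0 by ring, zpow_zero,
        show 1 - (N : ℤ) + n = n + 1 - (N : ℤ) by ring]
      ring
    have hexp : -(N : ℤ) * (n + 1 : ℕ) + triangle (n + 1 : ℕ) =
        -(N : ℤ) * n + triangle n + (n + 1 - (N : ℤ)) := by
      rw [Nat.cast_succ, triangle_add, show triangle 1 = 1 from rfl]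
      ring
    have ih := ih (Nat.lt_of_succ_lt hn)
    rw [hlast] at ih
    rw [qPoch_succ, hfactor, hexp, zpow_add₀ hq, pow_succ]
    linear_combination -q ^ (n + 1 - (N : ℤ)) * ih

namespace DoubleTwist

variable {m p l t N : ℕ} {q : ℂ} {n : ℕ → ℕ}

theorem prod_tauT_leftIdx (h : DoubleTwist m p l t) (hq : q ≠ 0) (n : ℕ → ℕ) {v : ℕ}
    (hv : v < p) :
    ∏ w ∈ range m, tauT l t q n (leftIdx m v w) =
      q ^ ∑ w ∈ range m, triangle (leftEntry n m v w - leftEntry n m v (w + 1)) := by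
  rw [← prod_zpow_eq_zpow_sum hq]
  refine prod_congr rfl fun w hw => ?_
  rw [tauT, h.sigmaT_leftIdx hv (mem_range.1 hw), if_neg (by decide)]
  rfl

theorem prod_tauT_rightIdx (h : DoubleTwist m p l t) (q : ℂ)
    (hn : ∀ i < 2 * m * p, n i ≤ n (i + 1)) {v : ℕ} (hv : v < p) :
    ∏ w ∈ range m, tauT l t q n (rightIdx m v w) =
      (-1) ^ n (m * (2 * v + 1)) * (-1) ^ n (m * (2 * (v + 1))) := by
  have hle : 2 * m * v + m + m ≤ 2 * m * p :=
    calc 2 * m * v + m + m = 2 * m * (v + 1) := by ring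
      _ ≤ 2 * m * p := Nat.mul_le_mul_left _ hv
  have hsign := prod_neg_one_pow_sub (R := ℂ) (fun w => n (2 * m * v + m + w)) m
    fun w hw => hn (2 * m * v + m + w) (by omega)
  have hcentre : 2 * m * v + m = m * (2 * v + 1) := by ring
  rw [add_zero, hcentre, show m * (2 * v + 1) + m = m * (2 * (v + 1)) by ring] at hsign
  rw [← hsign]
  refine prod_congr rfl fun w hw => ?_
  rw [tauT, h.sigmaT_rightIdx hv (mem_range.1 hw), if_pos rfl, rightIdx, Nat.add_sub_cancel,
    hcentre, add_assoc]

theorem prod_tauT (h : DoubleTwist m p l t) (hq : q ≠ 0) (h0 : n 0 = 0)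
    (hn : ∀ i < 2 * m * p, n i ≤ n (i + 1)) :
    ∏ j ∈ Icc 1 (2 * m * p), tauT l t q n j =
      q ^ (∑ v ∈ range p, ∑ w ∈ range m,
        triangle (leftEntry n m v w - leftEntry n m v (w + 1))) *
      ((-1) ^ n (2 * m * p) * ∏ i ∈ Icc 1 (2 * p - 1), (-1) ^ n (m * i)) := by
  have hshift := (prod_range_succ (fun v => (-1 : ℂ) ^ n (m * (2 * v))) p).symm.trans
    (prod_range_succ' _ p)
  rw [mul_zero, mul_zero, h0, pow_zero, mul_one, show m * (2 * p) = 2 * m * p by ring] at hshift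
  rw [prod_Icc_pairs (by rw [mul_zero, h0, pow_zero]), prod_Icc_blocks]
  simp only [prod_mul_distrib]
  rw [prod_congr rfl fun v hv => h.prod_tauT_leftIdx hq n (mem_range.1 hv),
    prod_congr rfl fun v hv => h.prod_tauT_rightIdx q hn (mem_range.1 hv),
    prod_zpow_eq_zpow_sum hq, prod_mul_distrib, ← hshift]
  ring

theorem XT_eq (h : DoubleTwist m p l t) (hq : q ≠ 0) (hqN : qPoch q q (N - 1) ≠ 0)
    (h0 : n 0 = 0) (hn : ∀ i < 2 * m * p, n i ≤ n (i + 1)) (hlt : ∀ i, n i < N) :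
    XT l t N q n =
      qPoch (q ^ (1 - (N : ℤ))) q (n (2 * m * p)) * (-1) ^ n (2 * m * p) *
        q ^ (-triangle (n (2 * m * p))) *
        q ^ (∑ v ∈ range p, ∑ w ∈ range m,
          triangle (leftEntry n m v w - leftEntry n m v (w + 1))) *
        (∏ i ∈ Icc 1 (2 * p - 1), (-1) ^ n (m * i)) *
        ∏ i ∈ Icc 1 (2 * m * p - 1), gbin q (n (i + 1)) (n i) := by
  have hne : ∀ k < N, qPoch q q k ≠ 0 := fun k hk =>
    qPoch_ne_zero_of_le (Nat.le_sub_one_of_lt hk) hqN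
  have hden : ∏ j ∈ Icc 1 (2 * m * p), qPoch q q (n j - n (j - 1)) ≠ 0 :=
    prod_ne_zero_iff.2 fun j _ => hne _ ((Nat.sub_le _ _).trans_lt (hlt j))
  have hlast : qPoch q q (N - n (2 * m * p) - 1) ≠ 0 :=
    hne _ (by have := hlt (2 * m * p); omega)
  have hgbin := prod_gbin_mul_prod_qPoch q h0 (2 * m * p - 1) fun i hi =>
    hn i (Nat.lt_add_one_of_le hi |>.trans_eq h.last_sub_one_add_one)
  rw [h.last_sub_one_add_one] at hgbin
  have hreflect := eq_div_of_mul_eq hlast (qPoch_zpow_one_sub_mul hq (hlt (2 * m * p)))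
  rw [XT, kapT, h.half_l, h.sigmaT_last, if_pos rfl, prod_div_distrib, h.prod_tauT hq h0 hn,
    ← hgbin, hreflect, zpow_add₀ hq, zpow_neg]
  have hU := zpow_ne_zero (triangle (n (2 * m * p))) hq
  field_simp

theorem summand_eq (h : DoubleTwist m p l t) (hq : q ≠ 0) (hqN : qPoch q q (N - 1) ≠ 0)
    (h0 : n 0 = 0) (hn : ∀ i < 2 * m * p, n i ≤ n (i + 1)) (hlt : ∀ i, n i < N) :
    q ^ (aT l t n * (N : ℤ) + b1T l t n + b2T l t n) * XT l t N q n =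
      qPoch (q ^ (1 - (N : ℤ))) q (n (2 * m * p)) * (-1 : ℂ) ^ (n (2 * m * p)) *
        q ^ (-triangle (n (2 * m * p))) *
        (∏ i ∈ Icc 1 (2 * m * p) with ¬ m ∣ i, ∏ j ∈ Icc (i + 1) (2 * m * p),
          q ^ (deltaLO m i j * (n i : ℤ) * (n j : ℤ))) *
        (∏ i ∈ Icc 1 (2 * p - 1), (-1 : ℂ) ^ (n (m * i)) *
          q ^ ((-1 : ℤ) ^ (i + 1) * (N : ℤ) * (n (m * i) : ℤ) + triangle (n (m * i)))) *
        ∏ i ∈ Icc 1 (2 * m * p - 1), q ^ (betLO m i * (n i : ℤ)) * gbin q (n (i + 1)) (n i) := by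
  have hexp := congrArg (q ^ ·) (h.exponent_eq h0 N)
  simp only [zpow_add₀ hq _ (∑ _ ∈ _, _)] at hexp
  rw [h.XT_eq hq hqN h0 hn hlt]
  simp only [prod_mul_distrib, prod_zpow_eq_zpow_sum hq]
  linear_combination (qPoch (q ^ (1 - (N : ℤ))) q (n (2 * m * p)) * (-1) ^ n (2 * m * p) *
    q ^ (-triangle (n (2 * m * p))) * (∏ i ∈ Icc 1 (2 * p - 1), (-1) ^ n (m * i)) *
    ∏ i ∈ Icc 1 (2 * m * p - 1), gbin q (n (i + 1)) (n i)) * hexp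

end DoubleTwist

theorem extTup_zero {P N : ℕ} (f : Fin P → Fin N) : extTup P N f 0 = 0 :=
  dif_neg (by omega)

theorem extTup_le_succ {P N : ℕ} {f : Fin P → Fin N} (hf : ∀ i j, i ≤ j → f i ≤ f j) :
    ∀ i < P, extTup P N f i ≤ extTup P N f (i + 1) := by
  intro i hi
  rcases i with _ | i
  · simp [extTup_zero]
  · rw [extTup, extTup, dif_pos (by omega), dif_pos (by omega)]
    exact hf _ _ (Fin.mk_le_mk.2 (by omega))

theorem extTup_lt {P N : ℕ} (hN : 0 < N) (f : Fin P → Fin N) (i : ℕ) : extTup P N f i < N := by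
  rw [extTup]
  split_ifs
  · exact (f _).isLt
  · exact hN

/-- Theorem 1.2 (Lovejoy–Osburn): the colored Jones polynomial of the double twist
knot `K_(-m,p)`, i.e. Takata's sum for `l = 4mp+1`, `t = 4mp-2p+1`, equals the stated
multiple `q`-hypergeometric sum. -/
theorem colored_jones_double_twist_neg_pos
    (m p N : ℕ) (hm : 0 < m) (hp : 0 < p) (hN : 0 < N)
    (q : ℂ) (hq : q ≠ 0) (hqN : qPoch q q (N - 1) ≠ 0) :
    (∑ f ∈ Finset.univ.filter
        (fun f : Fin (2 * m * p) → Fin N => ∀ i j, i ≤ j → f i ≤ f j),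
      let n := extTup (2 * m * p) N f
      q ^ (aT (4 * m * p + 1) (4 * m * p - 2 * p + 1) n * (N : ℤ)
            + b1T (4 * m * p + 1) (4 * m * p - 2 * p + 1) n
            + b2T (4 * m * p + 1) (4 * m * p - 2 * p + 1) n) *
        XT (4 * m * p + 1) (4 * m * p - 2 * p + 1) N q n)
    = ∑ f ∈ Finset.univ.filter
          (fun f : Fin (2 * m * p) → Fin N => ∀ i j, i ≤ j → f i ≤ f j),
        let n := extTup (2 * m * p) N f
        qPoch (q ^ (1 - (N : ℤ))) q (n (2 * m * p)) *
          (-1 : ℂ) ^ (n (2 * m * p)) *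
          q ^ (-(((n (2 * m * p) : ℤ) * ((n (2 * m * p) : ℤ) + 1)) / 2)) *
          (∏ i ∈ (Icc 1 (2 * m * p)).filter (fun i => ¬ m ∣ i),
            ∏ j ∈ Icc (i + 1) (2 * m * p),
              q ^ (deltaLO m i j * (n i : ℤ) * (n j : ℤ))) *
          (∏ i ∈ Icc 1 (2 * p - 1),
            (-1 : ℂ) ^ (n (m * i)) *
              q ^ ((-1 : ℤ) ^ (i + 1) * (N : ℤ) * (n (m * i) : ℤ)
                    + ((n (m * i) : ℤ) * ((n (m * i) : ℤ) + 1)) / 2)) *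
          (∏ i ∈ Icc 1 (2 * m * p - 1),
            q ^ (betLO m i * (n i : ℤ)) * gbin q (n (i + 1)) (n i)) := by
  have h : DoubleTwist m p (4 * m * p + 1) (4 * m * p - 2 * p + 1) := by
    have := Nat.mul_le_mul_right p (show 2 ≤ 4 * m by omega)
    exact ⟨hm, hp, rfl, by omega⟩
  refine sum_congr rfl fun f hf => ?_
  exact h.summand_eq hq hqN (extTup_zero f) (extTup_le_succ (mem_filter.1 hf).2) (extTup_lt hN f)

end
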